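/- Assume the curve setup with counterclockwise orientation and let a well distributed mesh with parameters κ ≥ 2 and M > 0 be given. Then there exist C > 0 and N₀ such that for every N ≥ N₀ and every z ∈ ℝ^N: ‖(L²/N²)·(B_N B̃_N − A_N Ã_N) z + π²·z‖_{ℓ²} + ‖(L²/N²)·(A_N B̃_N + B_N Ã_N) z‖_{ℓ²} ≤ (C/N)·‖z‖_{ℓ²}, and ‖(L²/N²)·(B̃_N B_N − Ã_N A_N) z + π²·z‖_{ℓ²} + ‖(L²/N²)·(Ã_N B_N + B̃_N A_N) z‖_{ℓ²} ≤ (C/N)·‖z‖_{ℓ²}. -/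

import Mathlib

open Real MeasureTheory

/-- Dot product of two points of the plane `ℝ² ≃ ℂ`. -/
noncomputable def dotR (z w : ℂ) : ℝ := z.re * w.re + z.im * w.im

/-- The unit normal vector `n(s) = (l₂'(s), -l₁'(s))` of a curve `l`. -/
noncomputable def normalv (l : ℝ → ℂ) (s : ℝ) : ℂ := -Complex.I * deriv l s

/-- The discretized double layer matrix. -/
noncomputable def Amat (l : ℝ → ℂ) {N : ℕ} (a b : Fin N → ℝ) : Matrix (Fin N) (Fin N) ℝ :=
  Matrix.of fun i j => dotR (l (a i) - l (b j)) (normalv l (a i)) / ‖l (a i) - l (b j)‖ ^ 2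

/-- The discretized singular (tangential) matrix. -/
noncomputable def Bmat (l : ℝ → ℂ) {N : ℕ} (a b : Fin N → ℝ) : Matrix (Fin N) (Fin N) ℝ :=
  Matrix.of fun i j => dotR (l (a i) - l (b j)) (deriv l (a i)) / ‖l (a i) - l (b j)‖ ^ 2

/-- The normalized `ℓ²` norm of a vector. -/
noncomputable def l2norm {N : ℕ} (z : Fin N → ℝ) : ℝ := Real.sqrt ((N : ℝ)⁻¹ * ∑ i, z i ^ 2)


/-- Partial derivative in the first variable. -/
noncomputable def pd1 (F : ℝ × ℝ → ℂ) : ℝ × ℝ → ℂ := fun p => fderiv ℝ F p (1, 0)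
/-- Partial derivative in the second variable. -/
noncomputable def pd2 (F : ℝ × ℝ → ℂ) : ℝ × ℝ → ℂ := fun p => fderiv ℝ F p (0, 1)

lemma pd1_smooth {F : ℝ × ℝ → ℂ} (hF : ContDiff ℝ (⊤ : ℕ∞) F) : ContDiff ℝ (⊤ : ℕ∞) (pd1 F) := by
  unfold pd1
  exact (hF.fderiv_right (m := (⊤ : ℕ∞)) (by simp)).clm_apply contDiff_const

lemma pd2_smooth {F : ℝ × ℝ → ℂ} (hF : ContDiff ℝ (⊤ : ℕ∞) F) : ContDiff ℝ (⊤ : ℕ∞) (pd2 F) := by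
  unfold pd2
  exact (hF.fderiv_right (m := (⊤ : ℕ∞)) (by simp)).clm_apply contDiff_const

lemma pd1_hasDerivAt {F : ℝ × ℝ → ℂ} (hF : ContDiff ℝ (⊤ : ℕ∞) F) (s t : ℝ) :
    HasDerivAt (fun x => F (x, t)) (pd1 F (s, t)) s := by
  have h := (hF.differentiable (by simp) (s, t)).hasFDerivAt
  exact h.comp_hasDerivAt s ((hasDerivAt_id s).prodMk (hasDerivAt_const s t))

lemma pd2_hasDerivAt {F : ℝ × ℝ → ℂ} (hF : ContDiff ℝ (⊤ : ℕ∞) F) (s t : ℝ) :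
    HasDerivAt (fun x => F (s, x)) (pd2 F (s, t)) t := by
  have h := (hF.differentiable (by simp) (s, t)).hasFDerivAt
  exact h.comp_hasDerivAt t ((hasDerivAt_const t s).prodMk (hasDerivAt_id t))

lemma pd_symm {F : ℝ × ℝ → ℂ} (hF : ContDiff ℝ (⊤ : ℕ∞) F) (p : ℝ × ℝ) :
    pd1 (pd2 F) p = pd2 (pd1 F) p := by
  have hd : DifferentiableAt ℝ (fderiv ℝ F) p :=
    (hF.fderiv_right (m := (⊤ : ℕ∞)) (by simp)).differentiable (by simp) p
  have hs : IsSymmSndFDerivAt ℝ F p := by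
    apply hF.contDiffAt.isSymmSndFDerivAt
    simp only [minSmoothness_of_isRCLikeNormedField]
    exact WithTop.coe_le_coe.2 (le_top : (2 : ℕ∞) ≤ ⊤)
  have e1 : pd1 (pd2 F) p = fderiv ℝ (fderiv ℝ F) p (1, 0) (0, 1) := by
    unfold pd1 pd2
    rw [fderiv_clm_apply hd (by fun_prop)]
    simp
  have e2 : pd2 (pd1 F) p = fderiv ℝ (fderiv ℝ F) p (0, 1) (1, 0) := by
    unfold pd1 pd2
    rw [fderiv_clm_apply hd (by fun_prop)]
    simp
  rw [e1, e2]
  exact hs _ _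

lemma pd_add_shift {F : ℝ × ℝ → ℂ} {v : ℝ × ℝ} (h : ∀ p, F (p + v) = F p) (p : ℝ × ℝ) :
    fderiv ℝ F (p + v) = fderiv ℝ F p := by
  rw [← fderiv_comp_add_right]
  congr 1
  funext q
  exact h q

/-- Parametric integrals of smooth functions are smooth. -/
lemma contDiff_param (n : ℕ) : ∀ (F : ℝ → ℂ) (k m : ℕ), ContDiff ℝ (⊤ : ℕ∞) F →
    ContDiff ℝ n (fun p : ℝ × ℝ =>
      ∫ θ in (0:ℝ)..1, ((1 - θ) ^ k * θ ^ m : ℝ) • F ((1 - θ) * p.2 + θ * p.1)) := by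
  induction n with
  | zero =>
    intro F k m hF
    have hc := hF.continuous
    simp only [Nat.cast_zero, contDiff_zero]
    apply intervalIntegral.continuous_parametric_intervalIntegral_of_continuous'
    fun_prop
  | succ n ih =>
    intro F k m hF
    have hc := hF.continuous
    have hd : ContDiff ℝ (⊤ : ℕ∞) (deriv F) := by
      have := (contDiff_infty_iff_deriv (𝕜 := ℝ) (f := F)).1 hF
      exact this.2
    have hdc := hd.continuous
    set F' : ℝ × ℝ → ℝ → (ℝ × ℝ →L[ℝ] ℂ) := fun p θ =>
      ((1 - θ) ^ k * θ ^ m : ℝ) • (((1 - θ) • ContinuousLinearMap.snd ℝ ℝ ℝ + θ • ContinuousLinearMap.fst ℝ ℝ ℝ : ℝ × ℝ →L[ℝ] ℝ).smulRight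
        (deriv F ((1 - θ) * p.2 + θ * p.1))) with hF'
    have hF'c : Continuous (fun q : (ℝ × ℝ) × ℝ => F' q.1 q.2) := by
      simp only [hF']
      refine Continuous.fun_smul (by fun_prop) ?_
      have h1 : Continuous (fun q : (ℝ × ℝ) × ℝ =>
          (((1 - q.2) • ContinuousLinearMap.snd ℝ ℝ ℝ + q.2 • ContinuousLinearMap.fst ℝ ℝ ℝ :
            ℝ × ℝ →L[ℝ] ℝ), deriv F ((1 - q.2) * q.1.2 + q.2 * q.1.1))) := by
        fun_prop
      exact (ContinuousLinearMap.continuous₂ (ContinuousLinearMap.smulRightL ℝ (ℝ × ℝ) ℂ)).comp h1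
    have key : ∀ p₀ : ℝ × ℝ, HasFDerivAt (fun p : ℝ × ℝ =>
      ∫ θ in (0:ℝ)..1, ((1 - θ) ^ k * θ ^ m : ℝ) • F ((1 - θ) * p.2 + θ * p.1))
        (∫ θ in (0:ℝ)..1, F' p₀ θ) p₀ := by
      intro p₀
      obtain ⟨C, hC⟩ := ((isCompact_closedBall p₀ 1).prod (isCompact_Icc (a := (0:ℝ)) (b := 1))).exists_bound_of_continuousOn hF'c.continuousOn
      apply intervalIntegral.hasFDerivAt_integral_of_dominated_of_fderiv_le (s := Metric.closedBall p₀ 1) (bound := fun _ => C) (Metric.closedBall_mem_nhds p₀ one_pos)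
      · refine Filter.Eventually.of_forall fun p => Continuous.aestronglyMeasurable ?_
        fun_prop
      · apply Continuous.intervalIntegrable
        fun_prop
      · apply Continuous.aestronglyMeasurable
        exact hF'c.comp (by fun_prop : Continuous fun θ : ℝ => (p₀, θ))
      · refine Filter.Eventually.of_forall fun θ hθ p hp => ?_
        rw [Set.uIoc_of_le zero_le_one] at hθ
        exact hC (p, θ) ⟨hp, ⟨hθ.1.le, hθ.2⟩⟩
      · simp
      · refine Filter.Eventually.of_forall fun θ hθ p hp => ?_
        have h1 : HasDerivAt F (deriv F ((1 - θ) * p.2 + θ * p.1)) ((1 - θ) * p.2 + θ * p.1) :=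
          (hF.differentiable (by simp) _).hasDerivAt
        have h2 : HasFDerivAt (fun p : ℝ × ℝ => (1 - θ) * p.2 + θ * p.1)
          ((1 - θ) • ContinuousLinearMap.snd ℝ ℝ ℝ + θ • ContinuousLinearMap.fst ℝ ℝ ℝ : ℝ × ℝ →L[ℝ] ℝ) p :=
          (hasFDerivAt_snd.const_mul _).add (hasFDerivAt_fst.const_mul _)
        have h3 := (h1.hasFDerivAt.comp p h2).const_smul ((1 - θ) ^ k * θ ^ m : ℝ)
        have e : F' p θ = ((1 - θ) ^ k * θ ^ m : ℝ) • (ContinuousLinearMap.toSpanSingleton ℝ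
            (deriv F ((1 - θ) * p.2 + θ * p.1))).comp ((1 - θ) • ContinuousLinearMap.snd ℝ ℝ ℝ
              + θ • ContinuousLinearMap.fst ℝ ℝ ℝ) := by
          ext <;> simp [hF']
        rw [e]
        exact h3
    have hF'i : ∀ p, (∫ θ in (0:ℝ)..1, F' p θ) =
        (ContinuousLinearMap.snd ℝ ℝ ℝ).smulRight (∫ θ in (0:ℝ)..1, ((1 - θ) ^ (k+1) * θ ^ m : ℝ) • deriv F ((1 - θ) * p.2 + θ * p.1))
        + (ContinuousLinearMap.fst ℝ ℝ ℝ).smulRight (∫ θ in (0:ℝ)..1, ((1 - θ) ^ k * θ ^ (m+1) : ℝ) • deriv F ((1 - θ) * p.2 + θ * p.1)) := by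
      intro p
      have hIntg : IntervalIntegrable (F' p) volume 0 1 :=
        Continuous.intervalIntegrable (hF'c.comp (by fun_prop : Continuous fun θ : ℝ => (p, θ))) _ _
      ext
      · rw [ContinuousLinearMap.comp_apply, ContinuousLinearMap.intervalIntegral_apply hIntg]
        simp only [hF']
        simp [pow_succ, mul_assoc]
      · rw [ContinuousLinearMap.comp_apply, ContinuousLinearMap.intervalIntegral_apply hIntg]
        simp only [hF']
        simp [pow_succ, mul_assoc, mul_comm, mul_left_comm]
    push_cast
    rw [contDiff_succ_iff_hasFDerivAt]
    refine ⟨_, ?_, key⟩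
    simp only [hF'i]
    apply ContDiff.add
    · exact contDiff_const.smulRight (ih _ _ _ hd)
    · exact contDiff_const.smulRight (ih _ _ _ hd)

lemma exists_quot (f : ℝ → ℂ) (hf : ContDiff ℝ (⊤ : ℕ∞) f) :
    ∃ D : ℝ × ℝ → ℂ, ContDiff ℝ (⊤ : ℕ∞) D ∧ (∀ s t, f s - f t = ((s - t : ℝ) : ℂ) * D (s, t)) ∧
      ∀ s, D (s, s) = deriv f s := by
  have hd : ContDiff ℝ (⊤ : ℕ∞) (deriv f) := ((contDiff_infty_iff_deriv (𝕜 := ℝ) (f := f)).1 hf).2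
  refine ⟨fun p => ∫ θ in (0:ℝ)..1, ((1 - θ) ^ 0 * θ ^ 0 : ℝ) • deriv f ((1 - θ) * p.2 + θ * p.1), ?_, ?_, ?_⟩
  · rw [contDiff_infty]
    intro n
    exact contDiff_param n (deriv f) 0 0 hd
  · intro s t
    have hdc := hd.continuous
    have h := intervalIntegral.integral_eq_sub_of_hasDerivAt (a := 0) (b := 1)
      (f := fun θ : ℝ => f ((1 - θ) * t + θ * s)) (f' := fun θ => (s - t) • deriv f ((1 - θ) * t + θ * s)) ?_ ?_
    · simp at h ⊢
      rw [← h]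
    · intro θ _
      have h1 : HasDerivAt f (deriv f ((1 - θ) * t + θ * s)) ((1 - θ) * t + θ * s) :=
          (hf.differentiable (by simp) _).hasDerivAt
      refine h1.scomp θ ?_
      have := (((hasDerivAt_id θ).const_sub 1).mul_const t).add ((hasDerivAt_id θ).mul_const s)
      have e : s - t = -1 * t + 1 * s := by ring
      rw [e]
      exact this
    · apply Continuous.intervalIntegrable
      fun_prop
  · intro s
    simp only [pow_zero, mul_one, one_smul]
    have : ∀ θ : ℝ, (1 - θ) * s + θ * s = s := fun θ => by ring
    simp [this]


/-- The reference circle. -/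
noncomputable def ee (L s : ℝ) : ℂ := Complex.exp (((2 * π * s / L : ℝ) : ℂ) * Complex.I)
/-- The logarithmic derivative of the reference circle. -/
noncomputable def cc (L : ℝ) : ℂ := ((2 * π / L : ℝ) : ℂ) * Complex.I

lemma ee_norm (L s : ℝ) : ‖ee L s‖ = 1 := by
  unfold ee; exact Complex.norm_exp_ofReal_mul_I _

lemma ee_ne (L s : ℝ) : ee L s ≠ 0 := Complex.exp_ne_zero _

lemma cc_ne {L : ℝ} (hL : 0 < L) : cc L ≠ 0 := by
  unfold cc
  apply mul_ne_zero _ Complex.I_ne_zero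
  have := pi_pos
  exact_mod_cast (by positivity : (2 * π / L) ≠ 0)

lemma cc_norm {L : ℝ} (hL : 0 < L) : ‖cc L‖ = 2 * π / L := by
  unfold cc
  have := pi_pos
  rw [norm_mul, Complex.norm_I, mul_one, Complex.norm_real, Real.norm_of_nonneg (by positivity)]

lemma ee_add (L s t : ℝ) : ee L (s + t) = ee L s * ee L t := by
  unfold ee
  rw [← Complex.exp_add]
  congr 1
  push_cast
  ring

lemma ee_sub (L s t : ℝ) : ee L (s - t) = ee L s / ee L t := by
  rw [eq_div_iff (ee_ne L t), ← ee_add, sub_add_cancel]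

lemma ee_hasDerivAt (L s : ℝ) : HasDerivAt (ee L) (cc L * ee L s) s := by
  have h1 : HasDerivAt (fun x : ℝ => 2 * π * x / L) (2 * π * 1 / L) s :=
    ((hasDerivAt_id s).const_mul (2 * π)).div_const L
  have h2 := (h1.ofReal_comp.mul_const Complex.I).cexp
  unfold ee cc
  convert h2 using 1
  push_cast
  ring

lemma ee_smooth (L : ℝ) : ContDiff ℝ (⊤ : ℕ∞) (ee L) := by
  unfold ee
  apply ContDiff.cexp
  apply ContDiff.mul _ contDiff_const
  apply Complex.ofRealCLM.contDiff.comp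
  exact (contDiff_const.mul contDiff_id).div_const _

lemma ee_period {L : ℝ} (hL : 0 < L) (s : ℝ) : ee L (s + L) = ee L s := by
  rw [ee_add]
  have : ee L L = 1 := by
    unfold ee
    rw [mul_div_assoc, div_self hL.ne', mul_one]
    push_cast
    exact Complex.exp_two_pi_mul_I
  rw [this, mul_one]

lemma ee_eq_iff {L : ℝ} (hL : 0 < L) (s t : ℝ) : ee L s = ee L t ↔ ∃ n : ℤ, s = t + n * L := by
  constructor
  · intro h
    unfold ee at h
    rw [Complex.exp_eq_exp_iff_exists_int] at h
    obtain ⟨n, hn⟩ := h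
    refine ⟨n, ?_⟩
    have h2 : (((2 * π * s / L : ℝ) : ℂ) - ((2 * π * t / L + n * (2 * π) : ℝ) : ℂ)) * Complex.I = 0 := by
      push_cast at hn ⊢
      linear_combination hn
    have h3 := (mul_eq_zero.1 h2).resolve_right Complex.I_ne_zero
    have h4 : 2 * π * s / L = 2 * π * t / L + n * (2 * π) := by exact_mod_cast sub_eq_zero.1 h3
    have := pi_pos
    field_simp at h4
    linarith
  · rintro ⟨n, rfl⟩
    have hp : Function.Periodic (ee L) L := ee_period hL
    exact hp.int_mul n t

lemma exists_Q (L : ℝ) (hL : 0 < L) (l : ℝ → ℂ)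
    (hsm : ContDiff ℝ (⊤ : ℕ∞) l) (hper : ∀ s, l (s + L) = l s)
    (harc : ∀ s, ‖deriv l s‖ = 1) (hinj : Set.InjOn l (Set.Ico 0 L)) :
    ∃ Q : ℝ × ℝ → ℂ, ContDiff ℝ (⊤ : ℕ∞) Q ∧
      (∀ s t, l s - l t = Q (s, t) * (ee L s - ee L t)) ∧
      (∀ p, Q p ≠ 0) ∧ (∀ p, Q (p + (L, 0)) = Q p) ∧ (∀ p, Q (p + (0, L)) = Q p) := by
  classical
  have hlp : Function.Periodic l L := hper
  have hep : Function.Periodic (ee L) L := ee_period hL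
  have hll : ∀ s t, ee L s = ee L t → l s = l t := by
    intro s t h
    obtain ⟨n, rfl⟩ := (ee_eq_iff hL s t).1 h
    exact hlp.int_mul n t
  have hle : ∀ s t, l s = l t → ee L s = ee L t := by
    intro s t h
    have h1 : l (toIcoMod hL 0 s) = l (toIcoMod hL 0 t) := by
      rw [toIcoMod, toIcoMod, hlp.sub_zsmul_eq, hlp.sub_zsmul_eq, h]
    have h2 := hinj (by simpa using toIcoMod_mem_Ico hL 0 s) (by simpa using toIcoMod_mem_Ico hL 0 t) h1
    have h3 := congrArg (ee L) h2
    rwa [toIcoMod, toIcoMod, hep.sub_zsmul_eq, hep.sub_zsmul_eq] at h3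
  have hdne : ∀ s, deriv l s ≠ 0 := by
    intro s h
    have := harc s
    rw [h, norm_zero] at this
    exact zero_ne_one this
  have hdp : ∀ s, deriv l (s + L) = deriv l s := by
    intro s
    rw [← deriv_comp_add_const]
    congr 1
    funext x
    exact hper x
  let Q : ℝ × ℝ → ℂ := fun p => if ee L p.1 = ee L p.2 then deriv l p.1 / (cc L * ee L p.1)
    else (l p.1 - l p.2) / (ee L p.1 - ee L p.2)
  have hQ2 : ∀ p, Q (p + (0, L)) = Q p := by
    intro p
    simp only [Q, Prod.fst_add, Prod.snd_add, add_zero, ee_period hL, hper]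
  have hQ1 : ∀ p, Q (p + (L, 0)) = Q p := by
    intro p
    simp only [Q, Prod.fst_add, Prod.snd_add, add_zero, ee_period hL, hper, hdp]
  refine ⟨Q, ?_, ?_, ?_, hQ1, hQ2⟩
  · obtain ⟨D, hD, hD1, hD2⟩ := exists_quot l hsm
    obtain ⟨E, hE, hE1, hE2⟩ := exists_quot (ee L) (ee_smooth L)
    have hEne : ∀ s t, |s - t| < L → E (s, t) ≠ 0 := by
      intro s t hst h0
      by_cases hs : s = t
      · subst hs
        rw [hE2, (ee_hasDerivAt L s).deriv] at h0
        exact mul_ne_zero (cc_ne hL) (ee_ne L s) h0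
      · have h1 := hE1 s t
        rw [h0, mul_zero, sub_eq_zero, ee_eq_iff hL] at h1
        obtain ⟨n, hn⟩ := h1
        have hn2 : s - t = n * L := by linarith
        rw [hn2, abs_mul, abs_of_pos hL] at hst
        have h3 : |(n : ℝ)| < 1 := by
          by_contra hcon
          push Not at hcon
          nlinarith
        have h4 : n = 0 := by
          have : |n| < 1 := by exact_mod_cast h3
          exact Int.abs_lt_one_iff.1 this
        apply hs
        rw [hn, h4]
        simp
    have hloc : ∀ s t, |s - t| < L → Q (s, t) = D (s, t) / E (s, t) := by
      intro s t hst
      have hne := hEne s t hst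
      simp only [Q]
      split_ifs with h
      · have h1 := hE1 s t
        rw [h, sub_self] at h1
        have h2 := (mul_eq_zero.1 h1.symm).resolve_right hne
        have h3 : s = t := by
          have : s - t = 0 := by exact_mod_cast h2
          linarith
        subst h3
        rw [hD2, hE2, (ee_hasDerivAt L s).deriv]
      · rw [hD1, hE1]
        have h3 : ((s - t : ℝ) : ℂ) ≠ 0 := by
          intro h0
          apply h
          have := hE1 s t
          rw [h0, zero_mul] at this
          exact sub_eq_zero.1 this
        field_simp
    have hQs : ∀ p : ℝ × ℝ, |p.1 - p.2| < L → ContDiffAt ℝ (⊤ : ℕ∞) Q p := by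
      intro p hp
      have h1 : ContDiffAt ℝ (⊤ : ℕ∞) (fun q => D q / E q) p := by
        simp only [div_eq_mul_inv]
        exact hD.contDiffAt.mul (hE.contDiffAt.inv (hEne p.1 p.2 hp))
      apply h1.congr_of_eventuallyEq
      have hopen : IsOpen {q : ℝ × ℝ | |q.1 - q.2| < L} := isOpen_lt (by fun_prop) (by fun_prop)
      filter_upwards [hopen.mem_nhds hp] with q hq
      exact hloc q.1 q.2 hq
    rw [contDiff_iff_contDiffAt]
    intro p
    set n := toIcoDiv hL 0 (p.1 - p.2) with hn
    have hper2 : ∀ q : ℝ × ℝ, Q (q + n • ((0 : ℝ), L)) = Q q := by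
      have : Function.Periodic Q ((0 : ℝ), L) := hQ2
      intro q
      exact this.zsmul n q
    have hm := toIcoMod_mem_Ico hL 0 (p.1 - p.2)
    have h1 : ContDiffAt ℝ (⊤ : ℕ∞) Q (p + n • ((0 : ℝ), L)) := by
      apply hQs
      rw [toIcoMod, ← hn] at hm
      simp only [Prod.fst_add, Prod.snd_add, Prod.smul_fst, Prod.smul_snd, smul_zero, add_zero]
      rw [abs_lt]
      simp only [Set.mem_Ico, zero_add] at hm
      constructor <;> linarith [hm.1, hm.2]
    have h2 : ContDiffAt ℝ (⊤ : ℕ∞) (fun q => Q (q + n • ((0 : ℝ), L))) p :=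
      h1.comp p (contDiffAt_id.add contDiffAt_const)
    have h3 : (fun q => Q (q + n • ((0 : ℝ), L))) = Q := funext hper2
    rwa [h3] at h2
  · intro s t
    simp only [Q]
    split_ifs with h
    · rw [h, sub_self, mul_zero, hll s t h, sub_self]
    · rw [div_mul_cancel₀ _ (sub_ne_zero.2 h)]
  · intro p
    simp only [Q]
    split_ifs with h
    · exact div_ne_zero (hdne _) (mul_ne_zero (cc_ne hL) (ee_ne _ _))
    · refine div_ne_zero (sub_ne_zero.2 fun h' => h (hle _ _ h')) (sub_ne_zero.2 h)


lemma periodic_bounded {L : ℝ} (hL : 0 < L) {F : ℝ × ℝ → ℂ} (hF : Continuous F)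
    (h1 : ∀ p, F (p + (L, 0)) = F p) (h2 : ∀ p, F (p + (0, L)) = F p) :
    ∃ C, 0 < C ∧ ∀ p, ‖F p‖ ≤ C := by
  obtain ⟨C, hC⟩ := ((isCompact_Icc (a := (0:ℝ)) (b := L)).prod
    (isCompact_Icc (a := (0:ℝ)) (b := L))).exists_bound_of_continuousOn hF.continuousOn
  refine ⟨max C 1, lt_max_of_lt_right one_pos, fun p => le_trans ?_ (le_max_left _ _)⟩
  have e1 : ∀ (n : ℤ) q, F (q - n • (L, (0:ℝ))) = F q := by
    have : Function.Periodic F (L, (0:ℝ)) := h1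
    exact fun n q => this.sub_zsmul_eq n
  have e2 : ∀ (n : ℤ) q, F (q - n • ((0:ℝ), L)) = F q := by
    have : Function.Periodic F ((0:ℝ), L) := h2
    exact fun n q => this.sub_zsmul_eq n
  have m1 := toIcoMod_mem_Ico hL 0 p.1
  have m2 := toIcoMod_mem_Ico hL 0 p.2
  rw [toIcoMod] at m1 m2
  simp only [zero_add] at m1 m2
  rw [← e1 (toIcoDiv hL 0 p.1) p, ← e2 (toIcoDiv hL 0 p.2)]
  apply hC
  simp only [Set.mem_prod, Prod.fst_sub, Prod.snd_sub, Prod.smul_fst, Prod.smul_snd, smul_zero,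
    sub_zero]
  exact ⟨Set.Ico_subset_Icc_self m1, Set.Ico_subset_Icc_self m2⟩

lemma pd1_per {F : ℝ × ℝ → ℂ} {v : ℝ × ℝ} (h : ∀ p, F (p + v) = F p) (p : ℝ × ℝ) :
    pd1 F (p + v) = pd1 F p := by
  unfold pd1; rw [pd_add_shift h]

lemma pd2_per {F : ℝ × ℝ → ℂ} {v : ℝ × ℝ} (h : ∀ p, F (p + v) = F p) (p : ℝ × ℝ) :
    pd2 F (p + v) = pd2 F p := by
  unfold pd2; rw [pd_add_shift h]

lemma smooth_quot {F G : ℝ × ℝ → ℂ} (hF : ContDiff ℝ (⊤ : ℕ∞) F) (hG : ContDiff ℝ (⊤ : ℕ∞) G)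
    (h0 : ∀ p, G p ≠ 0) : ContDiff ℝ (⊤ : ℕ∞) (fun p => F p / G p) := by
  simp only [div_eq_mul_inv]
  exact hF.mul (hG.inv h0)

lemma hasDerivAt_int {H : ℝ × ℝ → ℂ} (hH : ContDiff ℝ (⊤ : ℕ∞) H) (L x₀ : ℝ) :
    HasDerivAt (fun x => ∫ t in (0:ℝ)..L, H (x, t)) (∫ t in (0:ℝ)..L, pd1 H (x₀, t)) x₀ := by
  have hc := hH.continuous
  have hc1 := (pd1_smooth hH).continuous
  obtain ⟨C, hC⟩ := ((isCompact_closedBall x₀ 1).prod (isCompact_uIcc (a := (0:ℝ)) (b := L))).exists_bound_of_continuousOn hc1.continuousOn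
  refine (intervalIntegral.hasDerivAt_integral_of_dominated_loc_of_deriv_le
    (F := fun x t => H (x, t)) (F' := fun x t => pd1 H (x, t)) (bound := fun _ => C)
    (Metric.closedBall_mem_nhds x₀ one_pos) ?_ ?_ ?_ ?_ ?_ ?_).2
  · exact Filter.Eventually.of_forall fun x => Continuous.aestronglyMeasurable (by fun_prop)
  · exact Continuous.intervalIntegrable (by fun_prop) _ _
  · exact Continuous.aestronglyMeasurable (by fun_prop)
  · exact Filter.Eventually.of_forall fun t ht x hx => hC (x, t) ⟨hx, Set.uIoc_subset_uIcc ht⟩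
  · simp
  · exact Filter.Eventually.of_forall fun t ht x hx => pd1_hasDerivAt hH x t

lemma wind_const {L : ℝ} {F : ℝ × ℝ → ℂ} (hF : ContDiff ℝ (⊤ : ℕ∞) F) (h0 : ∀ p, F p ≠ 0)
    (hp : ∀ p, F (p + (0, L)) = F p) (x y : ℝ) :
    (∫ t in (0:ℝ)..L, pd2 F (x, t) / F (x, t)) = ∫ t in (0:ℝ)..L, pd2 F (y, t) / F (y, t) := by
  set H : ℝ × ℝ → ℂ := fun p => pd2 F p / F p with hH
  set G : ℝ × ℝ → ℂ := fun p => pd1 F p / F p with hG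
  have sH : ContDiff ℝ (⊤ : ℕ∞) H := smooth_quot (pd2_smooth hF) hF h0
  have sG : ContDiff ℝ (⊤ : ℕ∞) G := smooth_quot (pd1_smooth hF) hF h0
  have hHG : ∀ s t, pd1 H (s, t) = pd2 G (s, t) := by
    intro s t
    have e1 := (pd1_hasDerivAt sH s t).unique
      ((pd1_hasDerivAt (pd2_smooth hF) s t).div (pd1_hasDerivAt hF s t) (h0 _))
    have e2 := (pd2_hasDerivAt sG s t).unique
      ((pd2_hasDerivAt (pd1_smooth hF) s t).div (pd2_hasDerivAt hF s t) (h0 _))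
    rw [e1, e2, pd_symm hF]
    ring
  have hder : ∀ x₀, HasDerivAt (fun x => ∫ t in (0:ℝ)..L, H (x, t)) 0 x₀ := by
    intro x₀
    have h1 := hasDerivAt_int sH L x₀
    have h2 : (∫ t in (0:ℝ)..L, pd1 H (x₀, t)) = 0 := by
      simp only [hHG]
      rw [intervalIntegral.integral_eq_sub_of_hasDerivAt (f := fun t => G (x₀, t))
        (fun t _ => pd2_hasDerivAt sG x₀ t)]
      · have := pd1_per hp (x₀, 0)
        have h3 := hp (x₀, 0)
        simp only [Prod.mk_add_mk, add_zero, zero_add] at this h3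
        simp only [hG]
        rw [this, h3, sub_self]
      · have := (pd2_smooth sG).continuous
        exact Continuous.intervalIntegrable (by fun_prop) _ _
    rwa [h2] at h1
  exact is_const_of_deriv_eq_zero (fun x => (hder x).differentiableAt) (fun x => (hder x).deriv) x y

lemma circle_in {L : ℝ} (hL : 0 < L) (ζ : ℂ) (hζ : ‖ζ‖ < 1) :
    (∫ t in (0:ℝ)..L, cc L * ee L t / (ee L t - ζ)) = 2 * (π : ℂ) * Complex.I := by
  set F : ℝ × ℝ → ℂ := fun p => ee L p.2 - ((sin p.1 : ℝ) : ℂ) * ζ with hFd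
  have hF : ContDiff ℝ (⊤ : ℕ∞) F := by
    apply ContDiff.sub
    · exact (ee_smooth L).comp contDiff_snd
    · apply ContDiff.mul _ contDiff_const
      exact Complex.ofRealCLM.contDiff.comp (contDiff_sin.comp contDiff_fst)
  have h0 : ∀ p, F p ≠ 0 := by
    intro p h
    have h1 : ee L p.2 = ((sin p.1 : ℝ) : ℂ) * ζ := sub_eq_zero.1 h
    have h2 := congrArg norm h1
    rw [ee_norm, norm_mul, Complex.norm_real, Real.norm_eq_abs] at h2
    have := abs_sin_le_one p.1
    nlinarith [norm_nonneg ζ]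
  have hp : ∀ p, F (p + (0, L)) = F p := by
    intro p
    simp [hFd, ee_period hL]
  have hd : ∀ s t, pd2 F (s, t) = cc L * ee L t := by
    intro s t
    exact (pd2_hasDerivAt hF s t).unique ((ee_hasDerivAt L t).sub_const (((sin s : ℝ) : ℂ) * ζ))
  have := wind_const hF h0 hp (π / 2) 0
  simp only [hd] at this
  simp only [hFd, sin_pi_div_two, sin_zero, Complex.ofReal_one, one_mul, Complex.ofReal_zero, zero_mul, sub_zero] at this
  rw [this]
  have e : ∀ t, cc L * ee L t / ee L t = cc L := fun t => mul_div_cancel_right₀ _ (ee_ne L t)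
  simp only [e]
  simp only [intervalIntegral.integral_const, sub_zero, cc]
  rw [Complex.real_smul]
  push_cast
  have : (L : ℂ) ≠ 0 := by exact_mod_cast hL.ne'
  field_simp

lemma circle_out {L : ℝ} (hL : 0 < L) (ζ : ℂ) (hζ : 1 < ‖ζ‖) :
    (∫ t in (0:ℝ)..L, cc L * ee L t / (ee L t - ζ)) = 0 := by
  set F : ℝ × ℝ → ℂ := fun p => ((sin p.1 : ℝ) : ℂ) * ee L p.2 - ζ with hFd
  have hF : ContDiff ℝ (⊤ : ℕ∞) F := by
    apply ContDiff.sub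
    · apply ContDiff.mul
      · exact Complex.ofRealCLM.contDiff.comp (contDiff_sin.comp contDiff_fst)
      · exact (ee_smooth L).comp contDiff_snd
    · exact contDiff_const
  have h0 : ∀ p, F p ≠ 0 := by
    intro p h
    have h1 : ((sin p.1 : ℝ) : ℂ) * ee L p.2 = ζ := sub_eq_zero.1 h
    have h2 := congrArg norm h1
    rw [norm_mul, ee_norm, Complex.norm_real, Real.norm_eq_abs] at h2
    have := abs_sin_le_one p.1
    linarith
  have hp : ∀ p, F (p + (0, L)) = F p := by
    intro p
    simp [hFd, ee_period hL]
  have hd : ∀ s t, pd2 F (s, t) = ((sin s : ℝ) : ℂ) * (cc L * ee L t) := by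
    intro s t
    exact (pd2_hasDerivAt hF s t).unique
      (((ee_hasDerivAt L t).const_mul ((sin s : ℝ) : ℂ)).sub_const ζ)
  have := wind_const hF h0 hp (π / 2) 0
  simp only [hd] at this
  simpa [hFd] using this

lemma exists_near {L : ℝ} (hL : 0 < L) (a t : ℝ) : ∃ n : ℤ, |t + n * L - a| ≤ L / 2 := by
  refine ⟨-round ((t - a) / L), ?_⟩
  have h := abs_sub_round ((t - a) / L)
  have e : t + (-round ((t - a) / L) : ℤ) * L - a = ((t - a) / L - round ((t - a) / L)) * L := by
    push_cast
    field_simp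
    try ring
  rw [e, abs_mul, abs_of_pos hL]
  nlinarith

lemma chord_lower {L : ℝ} (hL : 0 < L) (s t : ℝ) (h : |t - s| ≤ L / 2) :
    4 / L * |t - s| ≤ ‖ee L t - ee L s‖ := by
  have h1 : ‖ee L t - ee L s‖ = ‖2 * sin (π * (t - s) / L)‖ := by
    have e : ee L t - ee L s = ee L s * (ee L (t - s) - 1) := by
      rw [ee_sub]
      field_simp [ee_ne]
    rw [e, norm_mul, ee_norm, one_mul]
    unfold ee
    rw [mul_comm, Complex.norm_exp_I_mul_ofReal_sub_one]
    congr 3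
    ring
  rw [h1, Real.norm_eq_abs, abs_mul, abs_two]
  have h2 : 2 / π * |π * (t - s) / L| ≤ |sin (π * (t - s) / L)| := by
    apply Real.mul_abs_le_abs_sin
    rw [abs_div, abs_mul, abs_of_pos pi_pos, abs_of_pos hL, div_le_iff₀ hL]
    nlinarith [pi_pos]
  rw [abs_div, abs_mul, abs_of_pos pi_pos, abs_of_pos hL] at h2
  have e : 2 / π * (π * |t - s| / L) = 2 / L * |t - s| := by
    field_simp
  rw [e] at h2
  calc 4 / L * |t - s| = 2 * (2 / L * |t - s|) := by ring
    _ ≤ _ := by linarith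

lemma chord_upper {L : ℝ} (hL : 0 < L) (s t : ℝ) : ‖ee L t - ee L s‖ ≤ 2 * π / L * |t - s| := by
  have := (convex_univ (𝕜 := ℝ) (E := ℝ)).norm_image_sub_le_of_norm_hasDerivWithin_le (f := ee L)
    (C := 2 * π / L) (x := s) (y := t) (fun x _ => (ee_hasDerivAt L x).hasDerivWithinAt)
    (fun x _ => by rw [norm_mul, ee_norm, mul_one, cc_norm hL]) (Set.mem_univ _) (Set.mem_univ _)
  simpa using this

lemma lip2 {F : ℝ × ℝ → ℂ} (hF : ContDiff ℝ (⊤ : ℕ∞) F) {C : ℝ} (hC : ∀ p, ‖pd2 F p‖ ≤ C)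
    (s t t' : ℝ) : ‖F (s, t') - F (s, t)‖ ≤ C * |t' - t| := by
  have := (convex_univ (𝕜 := ℝ) (E := ℝ)).norm_image_sub_le_of_norm_hasDerivWithin_le
    (f := fun x => F (s, x))
    (C := C) (x := t) (y := t') (fun x _ => (pd2_hasDerivAt hF s x).hasDerivWithinAt)
    (fun x _ => hC _) (Set.mem_univ _) (Set.mem_univ _)
  simpa using this

lemma Q_lip {L : ℝ} (hL : 0 < L) {F : ℝ × ℝ → ℂ} (hF : ContDiff ℝ (⊤ : ℕ∞) F)
    (h1 : ∀ p, F (p + (L, 0)) = F p) (h2 : ∀ p, F (p + (0, L)) = F p) :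
    ∃ C, 0 < C ∧ ∀ s t, ‖F (s, t) - F (s, s)‖ ≤ C * ‖ee L t - ee L s‖ := by
  obtain ⟨C, hC0, hC⟩ := periodic_bounded hL (pd2_smooth hF).continuous (pd2_per h1) (pd2_per h2)
  refine ⟨C * (L / 4), by positivity, fun s t => ?_⟩
  obtain ⟨n, hn⟩ := exists_near hL s t
  have e1 : F (s, t) = F (s, t + n * L) := by
    have hp : Function.Periodic F ((0:ℝ), L) := h2
    have := hp.zsmul n (s, t)
    rw [← this]
    congr 1
    simp
  have e2 : ee L t = ee L (t + n * L) := by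
    have hp : Function.Periodic (ee L) L := ee_period hL
    exact (hp.int_mul n t).symm
  rw [e1, e2]
  refine (lip2 hF hC _ _ _).trans ?_
  have := chord_lower hL s _ hn
  have h3 : |t + n * L - s| ≤ (L / 4) * ‖ee L (t + n * L) - ee L s‖ := by
    calc |t + n * L - s| = (L / 4) * (4 / L * |t + n * L - s|) := by field_simp
      _ ≤ _ := by gcongr
  rw [mul_assoc]
  gcongr


lemma deriv_formula {L : ℝ} {l : ℝ → ℂ} (hsm : ContDiff ℝ (⊤ : ℕ∞) l) {Q : ℝ × ℝ → ℂ}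
    (hQ : ContDiff ℝ (⊤ : ℕ∞) Q) (hQe : ∀ s t, l s - l t = Q (s, t) * (ee L s - ee L t)) (s t : ℝ) :
    deriv l t = pd2 Q (s, t) * (ee L t - ee L s) + Q (s, t) * (cc L * ee L t) := by
  have h1 : HasDerivAt (fun x => l s - l x) (-deriv l t) t :=
    ((hsm.differentiable (by simp) t).hasDerivAt).const_sub _
  have h2 : HasDerivAt (fun x => Q (s, x) * (ee L s - ee L x))
      (pd2 Q (s, t) * (ee L s - ee L t) + Q (s, t) * (-(cc L * ee L t))) t :=
    (pd2_hasDerivAt hQ s t).mul ((ee_hasDerivAt L t).const_sub _)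
  have h3 : (fun x => l s - l x) = (fun x => Q (s, x) * (ee L s - ee L x)) := funext fun x => hQe s x
  rw [h3] at h1
  linear_combination -h1.unique h2

lemma Q_lower {L : ℝ} (hL : 0 < L) {Q : ℝ × ℝ → ℂ} (hQ : ContDiff ℝ (⊤ : ℕ∞) Q)
    (h0 : ∀ p, Q p ≠ 0)
    (h1 : ∀ p, Q (p + (L, 0)) = Q p) (h2 : ∀ p, Q (p + (0, L)) = Q p) :
    ∃ c, 0 < c ∧ ∀ p, c ≤ ‖Q p‖ := by
  obtain ⟨C, hC0, hC⟩ := periodic_bounded hL (F := fun p => (Q p)⁻¹)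
    (hQ.continuous.inv₀ h0) (fun p => by rw [h1]) (fun p => by rw [h2])
  refine ⟨C⁻¹, by positivity, fun p => ?_⟩
  have := hC p
  rw [norm_inv] at this
  exact inv_le_of_inv_le₀ (norm_pos_iff.2 (h0 p)) this

lemma jump_bound {q qt q0 v ca x : ℂ} {c k ε C1 C2 K : ℝ} (hv : v ≠ 0)
    (hc : 0 < c) (hε : 0 < ε) (hK : 0 < K)
    (hq : c ≤ ‖q‖) (hqt : ‖qt‖ ≤ C1) (hq0 : ‖q - q0‖ ≤ C2 * ‖v‖) (hC2 : 0 ≤ C2)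
    (hca : ‖ca‖ = K) (hx : ‖x‖ = K)
    (hk : k = 1 ∨ k = -1)
    (b1 : ε ≤ ‖q * v - ε * k * Complex.I * (q0 * ca)‖)
    (b2 : ε * K ≤ ‖v - ε * k * Complex.I * ca‖) (hn : ‖q0 * ca‖ = 1) :
    ‖(qt * v + q * x) / (q * v - ε * k * Complex.I * (q0 * ca)) - x / (v - ε * k * Complex.I * ca)‖
      ≤ 4 * C1 / c + 2 * K * C1 + 2 * K ^ 2 * C2 := by
  have hC1 : 0 ≤ C1 := (norm_nonneg _).trans hqt
  set A := q * v - ε * k * Complex.I * (q0 * ca) with hA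
  set B := v - ε * k * Complex.I * ca with hB
  have hkn : ‖(ε * k * Complex.I : ℂ)‖ = ε := by
    have : ‖(k : ℂ)‖ = 1 := by
      rcases hk with h | h <;> simp [h]
    rw [norm_mul, norm_mul, this, Complex.norm_I, Complex.norm_real, Real.norm_of_nonneg hε.le]
    ring
  have hvp : 0 < ‖v‖ := norm_pos_iff.2 hv
  have hAp : 0 < ‖A‖ := hε.trans_le b1
  have hBp : 0 < ‖B‖ := (by positivity : 0 < ε * K).trans_le b2
  have hA0 : A ≠ 0 := norm_pos_iff.1 hAp
  have hB0 : B ≠ 0 := norm_pos_iff.1 hBp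
  have b3 : c * ‖v‖ / 2 ≤ ‖A‖ := by
    have h1 : ‖q * v‖ - ‖(ε * k * Complex.I : ℂ) * (q0 * ca)‖ ≤ ‖A‖ := norm_sub_norm_le _ _
    rw [norm_mul, norm_mul _ (q0 * ca), hkn, hn] at h1
    nlinarith
  have b4 : ‖v‖ / 2 ≤ ‖B‖ := by
    have h1 : ‖v‖ - ‖(ε * k * Complex.I : ℂ) * ca‖ ≤ ‖B‖ := norm_sub_norm_le _ _
    rw [norm_mul, hkn, hca] at h1
    linarith
  have e : (qt * v + q * x) / A - x / B =
      (qt * v * v) / (A * B) - (ε * k * Complex.I) * ca * qt * v / (A * B)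
        - (ε * k * Complex.I) * x * ca * (q - q0) / (A * B) := by
    field_simp
    rw [hA, hB]
    ring
  rw [e]
  have t1 : ‖(qt * v * v) / (A * B)‖ ≤ 4 * C1 / c := by
    rw [norm_div, norm_mul, norm_mul, norm_mul, div_le_div_iff₀ (by positivity) hc]
    have h2 : c * ‖v‖ / 2 * (‖v‖ / 2) ≤ ‖A‖ * ‖B‖ := by gcongr
    have h3 : ‖qt‖ * (‖v‖ * ‖v‖ * c) ≤ C1 * (‖v‖ * ‖v‖ * c) := by gcongr
    nlinarith
  have h5 : ε * (‖v‖ / 2) ≤ ‖A‖ * ‖B‖ := by gcongr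
  have t2 : ‖(ε * k * Complex.I) * ca * qt * v / (A * B)‖ ≤ 2 * K * C1 := by
    rw [norm_div, norm_mul, norm_mul, norm_mul, hkn, hca, norm_mul, div_le_iff₀ (by positivity)]
    calc ε * K * ‖qt‖ * ‖v‖ ≤ ε * K * C1 * ‖v‖ := by gcongr
      _ = 2 * K * C1 * (ε * (‖v‖ / 2)) := by ring
      _ ≤ _ := by gcongr
  have t3 : ‖(ε * k * Complex.I) * x * ca * (q - q0) / (A * B)‖ ≤ 2 * K ^ 2 * C2 := by
    rw [norm_div, norm_mul, norm_mul, norm_mul, hkn, hca, hx, norm_mul, div_le_iff₀ (by positivity)]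
    calc ε * K * K * ‖q - q0‖ ≤ ε * K * K * (C2 * ‖v‖) := by gcongr
      _ = 2 * K ^ 2 * C2 * (ε * (‖v‖ / 2)) := by ring
      _ ≤ _ := by gcongr
  refine (norm_sub_le _ _).trans (add_le_add ((norm_sub_le _ _).trans (add_le_add t1 t2)) t3)

lemma ae_ne {L : ℝ} (hL : 0 < L) (a : ℝ) : ∀ᵐ t : ℝ, ee L t ≠ ee L a := by
  have hc : {t : ℝ | ¬ (ee L t ≠ ee L a)}.Countable := by
    apply (Set.countable_range (fun n : ℤ => a + n * L)).mono
    intro t ht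
    simp only [Set.mem_ofPred_eq, not_not] at ht
    obtain ⟨n, hn⟩ := (ee_eq_iff hL t a).1 ht
    exact ⟨n, hn.symm⟩
  exact hc.measure_zero _

lemma jump_limit {L : ℝ} (hL : 0 < L) {l : ℝ → ℂ} (hsm : ContDiff ℝ (⊤ : ℕ∞) l)
    (harc : ∀ s, ‖deriv l s‖ = 1) {Q : ℝ × ℝ → ℂ}
    (hQ : ContDiff ℝ (⊤ : ℕ∞) Q) (hQe : ∀ s t, l s - l t = Q (s, t) * (ee L s - ee L t))
    (h0 : ∀ p, Q p ≠ 0)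
    (h1 : ∀ p, Q (p + (L, 0)) = Q p) (h2 : ∀ p, Q (p + (0, L)) = Q p)
    (a k r : ℝ) (hk : k = 1 ∨ k = -1) (hr : 0 < r)
    (b1 : ∀ ε, 0 < ε → ε ≤ r → ∀ t, ε ≤ ‖l t - (l a + ε * k * Complex.I * deriv l a)‖)
    (b2 : ∀ ε, 0 < ε → ε ≤ r → ∀ t, ε * (2 * π / L) ≤
      ‖ee L t - (ee L a + ε * k * Complex.I * (cc L * ee L a))‖) :
    Filter.Tendsto (fun ε : ℝ => ∫ t in (0:ℝ)..L,
      (deriv l t / (l t - (l a + ε * k * Complex.I * deriv l a))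
       - cc L * ee L t / (ee L t - (ee L a + ε * k * Complex.I * (cc L * ee L a)))))
      (nhdsWithin 0 (Set.Ioi 0)) (nhds (∫ t in (0:ℝ)..L, pd2 Q (a, t) / Q (a, t))) := by
  have hpi := pi_pos
  obtain ⟨c, hc0, hc⟩ := Q_lower hL hQ h0 h1 h2
  obtain ⟨C1, hC10, hC1⟩ := periodic_bounded hL (pd2_smooth hQ).continuous (pd2_per h1) (pd2_per h2)
  obtain ⟨C2, hC20, hC2⟩ := Q_lip hL hQ h1 h2
  have hlc := hsm.continuous
  have hdc : Continuous (deriv l) := ((contDiff_infty_iff_deriv (𝕜 := ℝ) (f := l)).1 hsm).2.continuous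
  have hec := (ee_smooth L).continuous
  have hla : deriv l a = Q (a, a) * (cc L * ee L a) := by
    have := deriv_formula hsm hQ hQe a a
    rw [sub_self, mul_zero, zero_add] at this
    exact this
  have hlt : ∀ t, l t - l a = Q (a, t) * (ee L t - ee L a) := by
    intro t
    linear_combination -hQe a t
  have hev : ∀ᶠ ε : ℝ in nhdsWithin 0 (Set.Ioi 0), 0 < ε ∧ ε ≤ r := by
    filter_upwards [Ioc_mem_nhdsGT hr] with ε hε
    exact hε
  apply intervalIntegral.tendsto_integral_filter_of_dominated_convergence
    (fun _ => 4 * C1 / c + 2 * (2 * π / L) * C1 + 2 * (2 * π / L) ^ 2 * C2)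
  · filter_upwards [hev] with ε hε
    apply Continuous.aestronglyMeasurable
    apply Continuous.sub
    · apply hdc.div₀ (by fun_prop)
      intro t h
      have := b1 ε hε.1 hε.2 t
      rw [h, norm_zero] at this
      linarith [hε.1]
    · apply Continuous.div₀ (by fun_prop) (by fun_prop)
      intro t h
      have := b2 ε hε.1 hε.2 t
      rw [h, norm_zero] at this
      have : 0 < ε * (2 * π / L) := by have := hε.1; positivity
      linarith
  · filter_upwards [hev] with ε hε
    filter_upwards [ae_ne hL a] with t ht _
    have hv : ee L t - ee L a ≠ 0 := sub_ne_zero.2 ht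
    have ea : l t - (l a + ε * k * Complex.I * deriv l a) =
        Q (a, t) * (ee L t - ee L a) - ε * k * Complex.I * (Q (a, a) * (cc L * ee L a)) := by
      rw [← hla]; linear_combination hlt t
    have eb : ee L t - (ee L a + ε * k * Complex.I * (cc L * ee L a)) =
      (ee L t - ee L a) - ε * k * Complex.I * (cc L * ee L a) := by ring
    have c1 := b1 ε hε.1 hε.2 t
    have c2 := b2 ε hε.1 hε.2 t
    rw [ea] at c1
    rw [eb] at c2
    rw [ea, eb, deriv_formula hsm hQ hQe a t]
    apply jump_bound hv hc0 hε.1 (by positivity) (hc _) (hC1 _) (hC2 _ _) hC20.le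
      (by rw [norm_mul, cc_norm hL, ee_norm, mul_one])
      (by rw [norm_mul, cc_norm hL, ee_norm, mul_one]) hk c1 c2
    rw [← hla, harc]
  · simp
  · filter_upwards [ae_ne hL a] with t ht _
    have hv : ee L t - ee L a ≠ 0 := sub_ne_zero.2 ht
    have hw : l t - l a ≠ 0 := by
      rw [hlt]
      exact mul_ne_zero (h0 _) hv
    have e : pd2 Q (a, t) / Q (a, t) = deriv l t / (l t - (l a + ((0:ℝ):ℂ) * k * Complex.I * deriv l a))
       - cc L * ee L t / (ee L t - (ee L a + ((0:ℝ):ℂ) * k * Complex.I * (cc L * ee L a))) := by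
      simp only [Complex.ofReal_zero, zero_mul, add_zero]
      rw [hlt, deriv_formula hsm hQ hQe a t]
      have := h0 (a, t)
      field_simp
      ring
    rw [e]
    refine Filter.Tendsto.mono_left ?_ nhdsWithin_le_nhds
    have hcont : ContinuousAt (fun ε : ℝ => deriv l t / (l t - (l a + ε * k * Complex.I * deriv l a))
       - cc L * ee L t / (ee L t - (ee L a + ε * k * Complex.I * (cc L * ee L a)))) 0 := by
      apply ContinuousAt.sub
      · apply ContinuousAt.div₀ continuousAt_const (by fun_prop)
        simpa using hw
      · apply ContinuousAt.div₀ continuousAt_const (by fun_prop)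
        simpa using hv
    exact hcont


lemma wind_path {L : ℝ} {l : ℝ → ℂ} (hsm : ContDiff ℝ (⊤ : ℕ∞) l) (hper : ∀ s, l (s + L) = l s)
    (p ν : ℂ) (r ε : ℝ) (hε : 0 < ε) (hεr : ε ≤ r)
    (hne : ∀ δ : ℝ, 0 < δ → δ ≤ r → ∀ t, l t - (p + δ * ν) ≠ 0) :
    (∫ t in (0:ℝ)..L, deriv l t / (l t - (p + ε * ν))) =
      ∫ t in (0:ℝ)..L, deriv l t / (l t - (p + r * ν)) := by
  have hr : 0 < r := hε.trans_le hεr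
  set F : ℝ × ℝ → ℂ := fun q => l q.2 - (p + ((r / (1 + q.1 ^ 2) : ℝ) : ℂ) * ν) with hFd
  have hF : ContDiff ℝ (⊤ : ℕ∞) F := by
    apply ContDiff.sub
    · exact hsm.comp contDiff_snd
    · apply contDiff_const.add
      apply ContDiff.mul _ contDiff_const
      apply Complex.ofRealCLM.contDiff.comp
      apply contDiff_const.div
      · exact contDiff_const.add (contDiff_fst.pow 2)
      · intro x
        positivity
  have h0 : ∀ q, F q ≠ 0 := by
    intro q
    apply hne
    · positivity
    · apply div_le_self hr.le
      nlinarith [sq_nonneg q.1]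
  have hp : ∀ q, F (q + (0, L)) = F q := by
    intro q
    simp [hFd, hper]
  have hd : ∀ s t, pd2 F (s, t) = deriv l t := by
    intro s t
    exact (pd2_hasDerivAt hF s t).unique ((hsm.differentiable (by simp) t).hasDerivAt.sub_const
      (p + ((r / (1 + s ^ 2) : ℝ) : ℂ) * ν))
  have := wind_const hF h0 hp (Real.sqrt (r / ε - 1)) 0
  simp only [hd] at this
  simp only [hFd] at this
  have hge : 0 ≤ r / ε - 1 := by
    rw [sub_nonneg, le_div_iff₀ hε]; linarith
  have e : r / (1 + √(r / ε - 1) ^ 2) = ε := by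
    rw [Real.sq_sqrt hge, add_sub_cancel, div_div_cancel₀ hr.ne']
  rw [e] at this
  simpa using this

lemma jump {L : ℝ} (hL : 0 < L) {l : ℝ → ℂ} (hsm : ContDiff ℝ (⊤ : ℕ∞) l)
    (hper : ∀ s, l (s + L) = l s)
    (harc : ∀ s, ‖deriv l s‖ = 1) {Q : ℝ × ℝ → ℂ}
    (hQ : ContDiff ℝ (⊤ : ℕ∞) Q) (hQe : ∀ s t, l s - l t = Q (s, t) * (ee L s - ee L t))
    (h0 : ∀ p, Q p ≠ 0)
    (h1 : ∀ p, Q (p + (L, 0)) = Q p) (h2 : ∀ p, Q (p + (0, L)) = Q p)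
    (z : ℂ) (hz : ∀ s, l s ≠ z) :
    (∫ t in (0:ℝ)..L, deriv l t / (l t - z)) = (∫ t in (0:ℝ)..L, pd2 Q (0, t) / Q (0, t)) ∨
    (∫ t in (0:ℝ)..L, deriv l t / (l t - z)) = (∫ t in (0:ℝ)..L, pd2 Q (0, t) / Q (0, t))
      + 2 * (π : ℂ) * Complex.I := by
  have hpi := pi_pos
  have hlc := hsm.continuous
  have hdc : Continuous (deriv l) := ((contDiff_infty_iff_deriv (𝕜 := ℝ) (f := l)).1 hsm).2.continuous
  have hec := (ee_smooth L).continuous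
  have hlp : Function.Periodic l L := hper
  obtain ⟨a, -, ha⟩ := (isCompact_Icc (a := (0:ℝ)) (b := L)).exists_isMinOn
    (Set.nonempty_Icc.2 hL.le) (f := fun t => ‖l t - z‖) (by fun_prop)
  have hmin : ∀ t, ‖l a - z‖ ≤ ‖l t - z‖ := by
    intro t
    have hm := toIcoMod_mem_Ico hL 0 t
    rw [zero_add] at hm
    have h3 : l (toIcoMod hL 0 t) = l t := by
      rw [toIcoMod, hlp.sub_zsmul_eq]
    have := ha (Set.Ico_subset_Icc_self hm)
    simp only [Set.mem_ofPred_eq, h3] at this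
    exact this
  set r := ‖l a - z‖ with hr
  have hr0 : 0 < r := norm_pos_iff.2 (sub_ne_zero.2 (hz a))
  have hda : deriv l a ≠ 0 := by
    intro h
    have := harc a
    rw [h, norm_zero] at this
    exact zero_ne_one this
  have hinner : inner ℝ (l a - z) (deriv l a) = 0 := by
    have hd : HasDerivAt (fun t => ‖l t - z‖ ^ 2) (2 * inner ℝ (l a - z) (deriv l a)) a :=
      ((hsm.differentiable (by simp) a).hasDerivAt.sub_const z).norm_sq
    have hlm : IsLocalMin (fun t => ‖l t - z‖ ^ 2) a := by
      apply Filter.Eventually.of_forall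
      intro t
      have := hmin t
      simp only
      gcongr
    have := hlm.hasDerivAt_eq_zero hd
    linarith
  have hzk : ∃ k : ℝ, (k = 1 ∨ k = -1) ∧ z = l a + r * (k * Complex.I * deriv l a) := by
    set q := (z - l a) / deriv l a with hq
    have hqn : ‖q‖ = r := by
      rw [hq, norm_div, harc, div_one, hr, norm_sub_rev]
    have hqr : q.re = 0 := by
      rw [hq, Complex.div_re]
      rw [Complex.inner] at hinner
      simp at hinner
      have : (z - l a).re * (deriv l a).re + (z - l a).im * (deriv l a).im = 0 := by
        simp
        linarith
      rw [← add_div, this, zero_div]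
    have hz' : z = l a + q * deriv l a := by
      rw [hq, div_mul_cancel₀ _ hda]; ring
    have hqi : q = (q.im : ℂ) * Complex.I := by
      apply Complex.ext <;> simp [hqr]
    have habs : |q.im| = r := by
      rw [hqi, norm_mul, Complex.norm_I, Complex.norm_real] at hqn
      simpa using hqn
    rcases abs_eq hr0.le |>.1 habs with h | h
    · refine ⟨1, Or.inl rfl, ?_⟩
      rw [h] at hqi
      rw [hz', hqi]
      push_cast; ring
    · refine ⟨-1, Or.inr rfl, ?_⟩
      rw [h] at hqi
      rw [hz', hqi]
      push_cast; ring
  obtain ⟨k, hk, hzk⟩ := hzk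
  have hkn : ‖(k : ℂ)‖ = 1 := by
    rcases hk with h | h <;> simp [h]
  have b1 : ∀ ε : ℝ, 0 < ε → ε ≤ r → ∀ t, ε ≤ ‖l t - (l a + ε * (k * Complex.I * deriv l a))‖ := by
    intro ε hε hεr t
    have h3 := hmin t
    have h4 : ‖l t - z‖ ≤ ‖l t - (l a + ε * (k * Complex.I * deriv l a))‖
        + ‖((r - ε : ℝ) : ℂ) * (k * Complex.I * deriv l a)‖ := by
      have : l t - z = (l t - (l a + ε * (k * Complex.I * deriv l a))) -
        ((r - ε : ℝ) : ℂ) * (k * Complex.I * deriv l a) := by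
        push_cast
        linear_combination -hzk
      rw [this]
      exact norm_sub_le _ _
    rw [norm_mul, norm_mul, norm_mul, hkn, harc, Complex.norm_I, Complex.norm_real,
      Real.norm_of_nonneg (by linarith)] at h4
    linarith
  have hpath : ∀ ε : ℝ, 0 < ε → ε ≤ r → (∫ t in (0:ℝ)..L, deriv l t / (l t - (l a + ε * (k * Complex.I * deriv l a)))) =
      ∫ t in (0:ℝ)..L, deriv l t / (l t - z) := by
    intro ε hε hεr
    rw [hzk]
    apply wind_path hsm hper _ _ r ε hε hεr
    intro δ hδ hδr t h
    have := b1 δ hδ hδr t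
    rw [h, norm_zero] at this
    linarith
  set r' := min r (L / (4 * π)) with hr'
  have hr'0 : 0 < r' := lt_min hr0 (by positivity)
  have hζ : ∀ ε : ℝ, ee L a + ε * (k * Complex.I * (cc L * ee L a)) =
      ((1 - ε * k * (2 * π / L) : ℝ) : ℂ) * ee L a := by
    intro ε
    unfold cc
    push_cast
    linear_combination (ε * k * (2 * π / L) * ee L a : ℂ) * Complex.I_sq
  have hsmall : ∀ ε : ℝ, 0 < ε → ε ≤ r' → 0 < ε * (2 * π / L) ∧ ε * (2 * π / L) ≤ 1 / 2 := by
    intro ε hε hεr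
    refine ⟨by positivity, ?_⟩
    calc ε * (2 * π / L) ≤ L / (4 * π) * (2 * π / L) := by
          gcongr
          exact hεr.trans (min_le_right _ _)
      _ = 1 / 2 := by field_simp; norm_num
  have b2 : ∀ ε : ℝ, 0 < ε → ε ≤ r' → ∀ t, ε * (2 * π / L) ≤
      ‖ee L t - (ee L a + ε * (k * Complex.I * (cc L * ee L a)))‖ := by
    intro ε hε hεr t
    obtain ⟨s1, s2⟩ := hsmall ε hε hεr
    rw [hζ]
    rcases hk with h | h
    · have := norm_sub_norm_le (ee L t) (((1 - ε * k * (2 * π / L) : ℝ) : ℂ) * ee L a)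
      rw [norm_mul, ee_norm, ee_norm, Complex.norm_real, h, mul_one, mul_one, Real.norm_of_nonneg (by linarith)] at this
      rw [h, mul_one]
      linarith
    · have := norm_sub_norm_le (((1 - ε * k * (2 * π / L) : ℝ) : ℂ) * ee L a) (ee L t)
      rw [norm_sub_rev] at this
      rw [norm_mul, ee_norm, ee_norm, Complex.norm_real, h, mul_one, Real.norm_of_nonneg (by linarith)] at this
      rw [h]
      linarith
  have hcirc : ∃ w : ℂ, (w = 0 ∨ w = 2 * (π : ℂ) * Complex.I) ∧ ∀ ε : ℝ, 0 < ε → ε ≤ r' →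
      (∫ t in (0:ℝ)..L, cc L * ee L t / (ee L t - (ee L a + ε * (k * Complex.I * (cc L * ee L a))))) = w := by
    rcases hk with h | h
    · refine ⟨_, Or.inr rfl, fun ε hε hεr => ?_⟩
      obtain ⟨s1, s2⟩ := hsmall ε hε hεr
      apply circle_in hL
      rw [hζ, norm_mul, ee_norm, Complex.norm_real, h, mul_one, mul_one, Real.norm_of_nonneg (by linarith)]
      linarith
    · refine ⟨_, Or.inl rfl, fun ε hε hεr => ?_⟩
      obtain ⟨s1, s2⟩ := hsmall ε hε hεr
      apply circle_out hL
      rw [hζ, norm_mul, ee_norm, Complex.norm_real, h, mul_one, Real.norm_of_nonneg (by linarith)]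
      linarith
  obtain ⟨w, hw, hcirc⟩ := hcirc
  have hlim := jump_limit hL hsm harc hQ hQe h0 h1 h2 a k r' hk hr'0
    (fun ε hε hεr t => by
      have := b1 ε hε (hεr.trans (min_le_left _ _)) t
      simpa only [mul_assoc] using this)
    (fun ε hε hεr t => by
      have := b2 ε hε hεr t
      simpa only [mul_assoc] using this)
  have hconst : Filter.Tendsto (fun ε : ℝ => ∫ t in (0:ℝ)..L,
      (deriv l t / (l t - (l a + ε * k * Complex.I * deriv l a))
       - cc L * ee L t / (ee L t - (ee L a + ε * k * Complex.I * (cc L * ee L a)))))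
      (nhdsWithin 0 (Set.Ioi 0)) (nhds ((∫ t in (0:ℝ)..L, deriv l t / (l t - z)) - w)) := by
    apply Filter.Tendsto.congr' _ tendsto_const_nhds
    filter_upwards [Ioc_mem_nhdsGT hr'0] with ε hε
    rw [← hpath ε hε.1 (hε.2.trans (min_le_left _ _)), ← hcirc ε hε.1 hε.2]
    rw [← intervalIntegral.integral_sub]
    · simp only [mul_assoc]
    · apply Continuous.intervalIntegrable
      apply hdc.div₀ (by fun_prop)
      intro t h
      have := b1 ε hε.1 (hε.2.trans (min_le_left _ _)) t
      rw [h, norm_zero] at this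
      linarith [hε.1]
    · apply Continuous.intervalIntegrable
      apply Continuous.div₀ (by fun_prop) (by fun_prop)
      intro t h
      have := b2 ε hε.1 hε.2 t
      rw [h, norm_zero] at this
      linarith [(hsmall ε hε.1 hε.2).1]
  have heq := tendsto_nhds_unique hlim hconst
  rw [wind_const hQ h0 h2 a 0] at heq
  rcases hw with h | h
  · left
    rw [heq, h, sub_zero]
  · right
    rw [heq, h, sub_add_cancel]

lemma W_zero {L : ℝ} (hL : 0 < L) {l : ℝ → ℂ} (hsm : ContDiff ℝ (⊤ : ℕ∞) l)
    (hper : ∀ s, l (s + L) = l s)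
    (harc : ∀ s, ‖deriv l s‖ = 1)
    (horient : ∃ z₀ : ℂ, (∀ s, l s ≠ z₀) ∧
      (∫ t in (0:ℝ)..L, deriv l t / (l t - z₀)) = 2 * (π : ℂ) * Complex.I) {Q : ℝ × ℝ → ℂ}
    (hQ : ContDiff ℝ (⊤ : ℕ∞) Q) (hQe : ∀ s t, l s - l t = Q (s, t) * (ee L s - ee L t))
    (h0 : ∀ p, Q p ≠ 0)
    (h1 : ∀ p, Q (p + (L, 0)) = Q p) (h2 : ∀ p, Q (p + (0, L)) = Q p) (s : ℝ) :
    (∫ t in (0:ℝ)..L, pd2 Q (s, t) / Q (s, t)) = 0 := by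
  rw [wind_const hQ h0 h2 s 0]
  have hJ := jump hL hsm hper harc hQ hQe h0 h1 h2
  set W := ∫ t in (0:ℝ)..L, pd2 Q (0, t) / Q (0, t) with hW
  obtain ⟨z₀, hz₀, hz⟩ := horient
  rcases hJ z₀ hz₀ with h | h
  · exfalso
    obtain ⟨B, hB⟩ := (isCompact_Icc (a := (0:ℝ)) (b := L)).exists_bound_of_continuousOn hsm.continuous.continuousOn
    have hB0 : 0 ≤ B := (norm_nonneg _).trans (hB 0 ⟨le_refl _, hL.le⟩)
    have hlp : Function.Periodic l L := hper
    have hBt : ∀ t, ‖l t‖ ≤ B := by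
      intro t
      have hm := toIcoMod_mem_Ico hL 0 t
      rw [zero_add] at hm
      have h3 : l (toIcoMod hL 0 t) = l t := by
        rw [toIcoMod, hlp.sub_zsmul_eq]
      rw [← h3]
      exact hB _ (Set.Ico_subset_Icc_self hm)
    set z : ℂ := ((B + L : ℝ) : ℂ) with hzd
    have hzn : ‖z‖ = B + L := by
      rw [hzd, Complex.norm_real, Real.norm_of_nonneg (by linarith)]
    have hlow : ∀ t, L ≤ ‖l t - z‖ := by
      intro t
      have := norm_sub_norm_le z (l t)
      rw [norm_sub_rev] at this
      linarith [hBt t]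
    have hbd : ‖∫ t in (0:ℝ)..L, deriv l t / (l t - z)‖ ≤ (1 / L) * |L - 0| := by
      apply intervalIntegral.norm_integral_le_of_norm_le_const
      intro t _
      rw [norm_div, harc]
      exact one_div_le_one_div_of_le hL (hlow t)
    rw [sub_zero, abs_of_pos hL, one_div, inv_mul_cancel₀ hL.ne'] at hbd
    have hne : ∀ s, l s ≠ z := by
      intro s hs
      have := hlow s
      rw [hs, sub_self, norm_zero] at this
      linarith
    have hp3 := pi_gt_three
    rcases hJ z hne with h' | h'
    · rw [h', ← h, hz] at hbd
      simp [abs_of_pos pi_pos] at hbd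
      linarith
    · rw [h', ← h, hz] at hbd
      have e : (2 * (π : ℂ) * Complex.I + 2 * π * Complex.I) = ((4 * π : ℝ) : ℂ) * Complex.I := by
        push_cast; ring
      rw [e] at hbd
      simp [abs_of_pos pi_pos] at hbd
      linarith
  · rw [hz] at h
    linear_combination -h


lemma midpoint_cell {g g' : ℝ → ℂ} (hg : ∀ t, HasDerivAt g (g' t) t) {C : ℝ} (hC : 0 ≤ C)
    (hlip : ∀ x y, ‖g' x - g' y‖ ≤ C * |x - y|) (c h : ℝ) (hh : 0 < h) :
    ‖(∫ t in (c - h / 2)..(c + h / 2), g t) - h * g c‖ ≤ C * (h / 2) * (h / 2) * h := by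
  have hgc : Continuous g := continuous_iff_continuousAt.2 fun t => (hg t).continuousAt
  have e : (∫ t in (c - h / 2)..(c + h / 2), g t) - h * g c
      = ∫ t in (c - h / 2)..(c + h / 2), (g t - g c - g' c * ((t - c : ℝ) : ℂ)) := by
    rw [intervalIntegral.integral_sub, intervalIntegral.integral_sub,
      intervalIntegral.integral_const, intervalIntegral.integral_const_mul,
      intervalIntegral.integral_ofReal]
    · have : ∫ x in (c - h / 2)..(c + h / 2), (x - c) = 0 := by
        simp
        ring
      rw [this]
      simp only [Complex.real_smul]
      push_cast
      ring
    · exact hgc.intervalIntegrable _ _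
    · exact continuous_const.intervalIntegrable _ _
    · exact (hgc.sub continuous_const).intervalIntegrable _ _
    · apply Continuous.intervalIntegrable
      fun_prop
  rw [e]
  have := intervalIntegral.norm_integral_le_of_norm_le_const (a := c - h / 2) (b := c + h / 2)
    (f := fun t => g t - g c - g' c * ((t - c : ℝ) : ℂ)) (C := C * (h / 2) * (h / 2)) ?_
  · refine this.trans (le_of_eq ?_)
    rw [abs_of_nonneg (by linarith)]
    ring
  · intro t ht
    rw [Set.uIoc_of_le (by linarith)] at ht
    have hconv : Convex ℝ (Set.Icc (c - h / 2) (c + h / 2)) := convex_Icc _ _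
    have := hconv.norm_image_sub_le_of_norm_hasDerivWithin_le
      (f := fun t => g t - g' c * ((t - c : ℝ) : ℂ)) (f' := fun t => g' t - g' c)
      (C := C * (h / 2)) (x := c) (y := t) ?_ ?_ ?_ ?_
    · have h1 : |t - c| ≤ h / 2 := abs_le.2 ⟨by linarith [ht.1], by linarith [ht.2]⟩
      simp only [sub_self, Complex.ofReal_zero, mul_zero, sub_zero, Real.norm_eq_abs] at this
      calc _ = ‖g t - g' c * ((t - c : ℝ) : ℂ) - g c‖ := by congr 1; ring
        _ ≤ _ := this
        _ ≤ _ := by gcongr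
    · intro x _
      apply HasDerivAt.hasDerivWithinAt
      have h2 : HasDerivAt (fun t : ℝ => ((t - c : ℝ) : ℂ)) 1 x := by
        have := (((hasDerivAt_id x).sub_const c)).ofReal_comp
        simpa using this
      have h3 := (hg x).sub (h2.const_mul (g' c))
      rw [mul_one] at h3
      exact h3
    · intro x hx
      refine (hlip x c).trans ?_
      have h1 : |x - c| ≤ h / 2 := abs_le.2 ⟨by linarith [hx.1], by linarith [hx.2]⟩
      gcongr
    · constructor <;> linarith
    · constructor <;> linarith [ht.1, ht.2]

lemma midpoint_rule {L : ℝ} (hL : 0 < L) {g g' : ℝ → ℂ} (hg : ∀ t, HasDerivAt g (g' t) t)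
    {C : ℝ} (hC : 0 ≤ C)
    (hlip : ∀ x y, ‖g' x - g' y‖ ≤ C * |x - y|) (hper : ∀ t, g (t + L) = g t)
    (hIntg : ∫ t in (0:ℝ)..L, g t = 0) (β : ℝ) (N : ℕ) (hN : 0 < N) :
    ‖((L / N : ℝ) : ℂ) * ∑ j : Fin N, g (((j : ℕ) + β) * (L / N))‖ ≤ C * L ^ 3 / (N : ℝ) ^ 2 := by
  have hgc : Continuous g := continuous_iff_continuousAt.2 fun t => (hg t).continuousAt
  have hN' : (0:ℝ) < N := by exact_mod_cast hN
  set h := L / N with hh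
  have hhp : 0 < h := by positivity
  have hNh : N * h = L := by rw [hh]; field_simp
  rw [Fin.sum_univ_eq_sum_range (fun j : ℕ => g ((j + β) * h)) N]
  have hsum := intervalIntegral.sum_integral_adjacent_intervals (f := g) (μ := volume)
    (a := fun k : ℕ => ((k:ℝ) + β) * h - h / 2) (n := N)
    (fun k _ => hgc.intervalIntegrable _ _)
  have hz : (∫ t in (((0:ℕ):ℝ) + β) * h - h / 2..((N:ℝ) + β) * h - h / 2, g t) = 0 := by
    have hp : Function.Periodic g L := hper
    have := hp.intervalIntegral_add_eq 0 ((((0:ℕ):ℝ) + β) * h - h / 2)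
    rw [zero_add, hIntg] at this
    rw [this]
    congr 1
    rw [← hNh]
    push_cast
    ring
  rw [hz] at hsum
  have e : ((h : ℝ) : ℂ) * ∑ j ∈ Finset.range N, g ((j + β) * h) =
      - ∑ j ∈ Finset.range N, ((∫ t in ((j:ℝ) + β) * h - h / 2..(((j + 1 : ℕ):ℝ) + β) * h - h / 2, g t)
        - h * g ((j + β) * h)) := by
    rw [Finset.sum_sub_distrib, hsum, Finset.mul_sum]
    ring
  rw [e, norm_neg]
  refine (norm_sum_le _ _).trans ?_
  calc _ ≤ ∑ j ∈ Finset.range N, C * (h / 2) * (h / 2) * h := by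
        apply Finset.sum_le_sum
        intro j _
        have := midpoint_cell hg hC hlip ((j + β) * h) h hhp
        have e2 : (((j + 1 : ℕ):ℝ) + β) * h - h / 2 = (j + β) * h + h / 2 := by push_cast; ring
        rw [e2]
        exact this
    _ = C * L ^ 3 / (N : ℝ) ^ 2 / 4 := by
        rw [Finset.sum_const, Finset.card_range, nsmul_eq_mul, hh]
        field_simp
        ring
    _ ≤ _ := by
        have : 0 ≤ C * L ^ 3 / (N : ℝ) ^ 2 := by positivity
        linarith


lemma inv_geom {N : ℕ} {z : ℂ} (hz : z ^ N = -1) (h1 : z ≠ 1) :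
    1 / (1 - z) = 1 / 2 * ∑ m ∈ Finset.range N, z ^ m := by
  rw [geom_sum_eq h1, hz]
  have : z - 1 ≠ 0 := sub_ne_zero.2 h1
  have : 1 - z ≠ 0 := sub_ne_zero.2 h1.symm
  field_simp
  ring

lemma root_sum {N : ℕ} {x : ℂ} (hx : x ^ N = 1) (h1 : x ≠ 1) :
    ∑ j ∈ Finset.range N, x ^ j = 0 := by
  rw [geom_sum_eq h1, hx]; simp

lemma ne_one_of_pow {N : ℕ} {z : ℂ} (hz : z ^ N = -1) : z ≠ 1 := by
  rintro rfl
  norm_num at hz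

lemma sum_inv {N : ℕ} (hN : 0 < N) {w η : ℂ} (hw : IsPrimitiveRoot w N) (hη : η ^ N = -1) :
    ∑ j ∈ Finset.range N, 1 / (1 - η * w ^ j) = N / 2 := by
  have hp : ∀ j : ℕ, (η * w ^ j) ^ N = -1 := by
    intro j
    rw [mul_pow, hη, ← pow_mul, mul_comm j, pow_mul, hw.pow_eq_one]; simp
  have : ∀ j ∈ Finset.range N, 1 / (1 - η * w ^ j) =
      1 / 2 * ∑ m ∈ Finset.range N, (η * w ^ j) ^ m :=
    fun j _ => inv_geom (hp j) (ne_one_of_pow (hp j))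
  rw [Finset.sum_congr rfl this, ← Finset.mul_sum, Finset.sum_comm]
  have h2 : ∀ m ∈ Finset.range N, ∑ j ∈ Finset.range N, (η * w ^ j) ^ m
      = if m = 0 then (N : ℂ) else 0 := by
    intro m hm
    split_ifs with h
    · simp [h]
    · have : ∀ j ∈ Finset.range N, (η * w ^ j) ^ m = η ^ m * (w ^ m) ^ j := by
        intro j _
        rw [mul_pow]; ring
      rw [Finset.sum_congr rfl this, ← Finset.mul_sum, root_sum, mul_zero]
      · rw [← pow_mul, mul_comm, pow_mul, hw.pow_eq_one, one_pow]
      · exact hw.pow_ne_one_of_pos_of_lt h (Finset.mem_range.1 hm)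
  rw [Finset.sum_congr rfl h2, Finset.sum_ite_eq' (Finset.range N) 0 (fun _ => (N:ℂ))]
  simp [hN]
  ring

lemma sum_inv_sq {N : ℕ} (hN : 0 < N) {w η : ℂ} (hw : IsPrimitiveRoot w N) (hη : η ^ N = -1)
    (hwn : ‖w‖ = 1) (hηn : ‖η‖ = 1) :
    ∑ j ∈ Finset.range N, 1 / ‖1 - η * w ^ j‖ ^ 2 = (N : ℝ) ^ 2 / 4 := by
  have hp : ∀ j : ℕ, (η * w ^ j) ^ N = -1 := by
    intro j
    rw [mul_pow, hη, ← pow_mul, mul_comm j, pow_mul, hw.pow_eq_one]; simp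
  have hw0 : w ≠ 0 := by intro h; simp [h] at hwn
  have hη0 : η ≠ 0 := by intro h; simp [h] at hηn
  have hwc : (starRingEnd ℂ) w = w⁻¹ := by
    rw [Complex.inv_def, Complex.normSq_eq_norm_sq, hwn]; simp
  have hηc : (starRingEnd ℂ) η = η⁻¹ := by
    rw [Complex.inv_def, Complex.normSq_eq_norm_sq, hηn]; simp
  rw [← Complex.ofReal_inj]
  push_cast
  have : ∀ j ∈ Finset.range N, 1 / ((‖1 - η * w ^ j‖ : ℝ) : ℂ) ^ 2 =
      1 / 4 * ∑ m ∈ Finset.range N, ∑ m' ∈ Finset.range N,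
        (η ^ m * (η⁻¹) ^ m') * (w ^ m * (w⁻¹) ^ m') ^ j := by
    intro j _
    have h1 := inv_geom (hp j) (ne_one_of_pow (hp j))
    have h2 := congrArg (starRingEnd ℂ) h1
    have h3 : ((‖1 - η * w ^ j‖ : ℝ) : ℂ) ^ 2 = (1 - η * w ^ j) * (starRingEnd ℂ) (1 - η * w ^ j) := by
      rw [Complex.mul_conj, Complex.normSq_eq_norm_sq]; push_cast; rfl
    rw [h3, ← one_div_mul_one_div, h1]
    rw [map_div₀, map_one] at h2
    rw [h2, map_mul, map_sum]
    simp only [map_div₀, map_one, map_ofNat, map_pow, map_mul, hwc, hηc]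
    rw [show ∀ a b : ℂ, 1 / 2 * a * (1 / 2 * b) = 1 / 4 * (a * b) by intros; ring,
      Finset.sum_mul_sum]
    congr 1
    apply Finset.sum_congr rfl; intro m _
    apply Finset.sum_congr rfl; intro m' _
    rw [mul_pow, mul_pow, mul_pow]
    ring
  rw [Finset.sum_congr rfl this, ← Finset.mul_sum, Finset.sum_comm]
  have h2 : ∀ m ∈ Finset.range N, ∑ j ∈ Finset.range N, ∑ m' ∈ Finset.range N,
        (η ^ m * (η⁻¹) ^ m') * (w ^ m * (w⁻¹) ^ m') ^ j = N := by
    intro m hm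
    rw [Finset.sum_comm]
    have h3 : ∀ m' ∈ Finset.range N, ∑ j ∈ Finset.range N,
        (η ^ m * (η⁻¹) ^ m') * (w ^ m * (w⁻¹) ^ m') ^ j = if m = m' then (N:ℂ) else 0 := by
      intro m' hm'
      rw [← Finset.mul_sum]
      split_ifs with h
      · subst h
        rw [inv_pow, inv_pow, mul_inv_cancel₀ (pow_ne_zero _ hη0),
          mul_inv_cancel₀ (pow_ne_zero _ hw0)]
        simp
      · rw [root_sum, mul_zero]
        · rw [mul_pow, ← pow_mul, ← pow_mul, mul_comm m, mul_comm m', pow_mul, pow_mul, inv_pow,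
            hw.pow_eq_one]; simp
        · intro h4
          rw [inv_pow, mul_inv_eq_one₀ (pow_ne_zero _ hw0)] at h4
          exact h (hw.pow_inj (Finset.mem_range.1 hm) (Finset.mem_range.1 hm') h4)
    rw [Finset.sum_congr rfl h3, Finset.sum_ite_eq]
    simp [hm]
  rw [Finset.sum_congr rfl h2]
  simp
  ring

lemma pert_inv {z z0 : ℂ} {δ : ℝ} (hz : ‖z - z0‖ ≤ δ) (h0 : 2 * δ ≤ ‖1 - z0‖) (hδ : 0 < ‖1 - z0‖) :
    z ≠ 1 ∧ ‖1 / (1 - z) - 1 / (1 - z0)‖ ≤ 2 * δ * (1 / ‖1 - z0‖ ^ 2) ∧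
      |1 / ‖1 - z‖ ^ 2 - 1 / ‖1 - z0‖ ^ 2| ≤ 6 * δ * (1 / ‖1 - z0‖) * (1 / ‖1 - z0‖ ^ 2) := by
  have h1 : |‖1 - z‖ - ‖1 - z0‖| ≤ δ := by
    refine (abs_norm_sub_norm_le _ _).trans ?_
    rw [show 1 - z - (1 - z0) = -(z - z0) by ring, norm_neg]; exact hz
  set u := ‖1 - z0‖ with hu
  have hv : u / 2 ≤ ‖1 - z‖ := by linarith [(abs_le.1 h1).1]
  have hvp : 0 < ‖1 - z‖ := by linarith
  have hz1 : 1 - z ≠ 0 := norm_pos_iff.1 hvp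
  have hz0 : 1 - z0 ≠ 0 := norm_pos_iff.1 hδ
  have hδ0 : 0 ≤ δ := (norm_nonneg _).trans hz
  refine ⟨fun h => hz1 (by rw [h, sub_self]), ?_, ?_⟩
  · have : 1 / (1 - z) - 1 / (1 - z0) = (z - z0) / ((1 - z) * (1 - z0)) := by
      field_simp; ring
    rw [this, norm_div, norm_mul, ← hu]
    calc _ ≤ δ / (u / 2 * u) := by gcongr
      _ = _ := by field_simp
  · set v := ‖1 - z‖
    have : 1 / v ^ 2 - 1 / u ^ 2 = (u - v) * (1 / (u * v ^ 2) + 1 / (u ^ 2 * v)) := by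
      field_simp; ring
    rw [this, abs_mul, abs_sub_comm, abs_of_nonneg (by positivity : 0 ≤ 1 / (u * v ^ 2) + 1 / (u ^ 2 * v))]
    calc _ ≤ δ * (1 / (u * (u / 2) ^ 2) + 1 / (u ^ 2 * (u / 2))) := by gcongr
      _ = _ := by field_simp; ring


lemma exists_K {L : ℝ} (hL : 0 < L) {l : ℝ → ℂ}
    (hsm : ContDiff ℝ (⊤ : ℕ∞) l) (hper : ∀ s, l (s + L) = l s)
    (harc : ∀ s, ‖deriv l s‖ = 1) (hinj : Set.InjOn l (Set.Ico 0 L))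
    (horient : ∃ z₀ : ℂ, (∀ s, l s ≠ z₀) ∧
      (∫ t in (0:ℝ)..L, deriv l t / (l t - z₀)) = 2 * (π : ℂ) * Complex.I) :
    ∃ K : ℝ × ℝ → ℂ, ContDiff ℝ (⊤ : ℕ∞) K ∧ (∀ p, K (p + (L, 0)) = K p) ∧
      (∀ p, K (p + (0, L)) = K p) ∧ (∀ s, ∫ t in (0:ℝ)..L, K (s, t) = 0) ∧
      (∀ s t, ee L s ≠ ee L t → l s ≠ l t ∧
        deriv l t / (l s - l t) = cc L * ee L t / (ee L s - ee L t) + K (s, t)) ∧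
      ∃ c, 0 < c ∧ ∀ s t, c * ‖ee L s - ee L t‖ ≤ ‖l s - l t‖ := by
  obtain ⟨Q, hQ, hQe, h0, h1, h2⟩ := exists_Q L hL l hsm hper harc hinj
  refine ⟨fun p => -(pd2 Q p / Q p), (smooth_quot (pd2_smooth hQ) hQ h0).neg, ?_, ?_, ?_, ?_, ?_⟩
  · intro p
    simp only [pd2_per h1, h1]
  · intro p
    simp only [pd2_per h2, h2]
  · intro s
    rw [intervalIntegral.integral_neg, W_zero hL hsm hper harc horient hQ hQe h0 h1 h2 s, neg_zero]
  · intro s t hst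
    have hd : ee L s - ee L t ≠ 0 := sub_ne_zero.2 hst
    have hq := h0 (s, t)
    refine ⟨fun h => ?_, ?_⟩
    · have := hQe s t
      rw [h, sub_self] at this
      exact (mul_ne_zero hq hd) this.symm
    · rw [deriv_formula hsm hQ hQe s t, hQe s t]
      field_simp
      ring
  · obtain ⟨c, hc, hcl⟩ := Q_lower hL hQ h0 h1 h2
    refine ⟨c, hc, fun s t => ?_⟩
    rw [hQe s t, norm_mul]
    gcongr
    exact hcl _

lemma K_deriv {L : ℝ} {l : ℝ → ℂ}
    (hsm : ContDiff ℝ (⊤ : ℕ∞) l) {K : ℝ × ℝ → ℂ} (hK : ContDiff ℝ (⊤ : ℕ∞) K)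
    (hf : ∀ s t, ee L s ≠ ee L t → l s ≠ l t ∧
        deriv l t / (l s - l t) = cc L * ee L t / (ee L s - ee L t) + K (s, t))
    (s t : ℝ) (hst : ee L s ≠ ee L t) :
    deriv l s / (l s - l t) * (deriv l t / (l t - l s)) =
      -(cc L ^ 2 * (ee L s * ee L t / (ee L s - ee L t) ^ 2)) + pd1 K (s, t) := by
  have hl := (hsm.differentiable (by simp) s).hasDerivAt
  have he := ee_hasDerivAt L s
  have hne := (hf s t hst).1
  have hd : ee L s - ee L t ≠ 0 := sub_ne_zero.2 hst
  have hd2 : l s - l t ≠ 0 := sub_ne_zero.2 hne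
  have hd3 : l t - l s ≠ 0 := sub_ne_zero.2 hne.symm
  have A := (hasDerivAt_const s (deriv l t)).fun_div (hl.sub_const (l t)) hd2
  have B := ((hasDerivAt_const s (cc L * ee L t)).fun_div (he.sub_const (ee L t)) hd).fun_add
    (pd1_hasDerivAt hK s t)
  have hev : (fun x => deriv l t / (l x - l t)) =ᶠ[nhds s]
      fun x => cc L * ee L t / (ee L x - ee L t) + K (x, t) := by
    have : ∀ᶠ x in nhds s, ee L x ≠ ee L t := he.continuousAt.eventually_ne hst
    filter_upwards [this] with x hx
    exact (hf x t hx).2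
  have E := A.unique (B.congr_of_eventuallyEq hev)
  have e1 : deriv l s / (l s - l t) * (deriv l t / (l t - l s)) =
      (0 * (l s - l t) - deriv l t * deriv l s) / (l s - l t) ^ 2 := by
    rw [show l t - l s = -(l s - l t) by ring]
    field_simp
    ring
  rw [e1, E]
  congr 1
  field_simp
  ring

lemma ee_nat_mul (L x : ℝ) (n : ℕ) : ee L (n * x) = ee L x ^ n := by
  unfold ee
  rw [← Complex.exp_nat_mul]
  congr 1
  push_cast
  ring

lemma ee_prim {L : ℝ} (hL : 0 < L) (N : ℕ) (hN : 0 < N) :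
    IsPrimitiveRoot (ee L (-(L / N))) N := by
  have h := (Complex.isPrimitiveRoot_exp N hN.ne').inv
  have e : ee L (-(L / N)) = (Complex.exp (2 * π * Complex.I / N))⁻¹ := by
    unfold ee
    rw [← Complex.exp_neg]
    congr 1
    push_cast
    have : (L:ℂ) ≠ 0 := by exact_mod_cast hL.ne'
    have : (N:ℂ) ≠ 0 := by exact_mod_cast hN.ne'
    field_simp
  rw [e]
  exact h

lemma circle_sums {L M : ℝ} (hL : 0 < L) (hM : 0 < M) {α β : ℝ} (hαβ : ee L ((α - β) * L) = -1)
    {N : ℕ} (hN : 0 < N) (hNb : 4 * π * M / L ≤ (N:ℝ) ^ 2) (b : Fin N → ℝ)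
    (hb : ∀ j : Fin N, |b j - ((j : ℕ) + β) * (L / N)| ≤ M / (N:ℝ) ^ 3)
    (s : ℝ) (i : ℕ) (hs : |s - (i + α) * (L / N)| ≤ M / (N:ℝ) ^ 3) :
    (∀ j, ee L (s - b j) ≠ 1) ∧
    ‖∑ j, 1 / (1 - ee L (s - b j)) - N / 2‖ ≤ (4 * π * M / L) / N ∧
    |∑ j, 1 / ‖1 - ee L (s - b j)‖ ^ 2 - (N:ℝ) ^ 2 / 4| ≤ (4 * π * M / L) := by
  have hN' : (0:ℝ) < N := by exact_mod_cast hN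
  set D := 4 * π * M / L with hD
  have hDp : 0 < D := by have := pi_pos; positivity
  set w := ee L (-(L / N)) with hw
  set η := ee L ((i + (α - β)) * (L / N)) with hη
  have hwp : IsPrimitiveRoot w N := ee_prim hL N hN
  have hηN : η ^ N = -1 := by
    rw [hη, ← ee_nat_mul]
    have : (N:ℝ) * ((i + (α - β)) * (L / N)) = (α - β) * L + i * L := by field_simp; ring
    rw [this, ee_add, hαβ, ee_nat_mul]
    have : ee L L = 1 := by
      have := (ee_eq_iff hL L 0).2 ⟨1, by simp⟩
      rw [this]; simp [ee]
    rw [this]; simp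
  have hz0 : ∀ j : ℕ, η * w ^ j = ee L ((i + α) * (L / N) - (j + β) * (L / N)) := by
    intro j
    rw [hη, hw, ← ee_nat_mul, ← ee_add]
    congr 1; ring
  have hS1 := sum_inv hN hwp hηN
  have hS2 := sum_inv_sq hN hwp hηN (ee_norm _ _) (ee_norm _ _)
  rw [← Fin.sum_univ_eq_sum_range (fun j : ℕ => 1 / (1 - η * w ^ j)) N] at hS1
  rw [← Fin.sum_univ_eq_sum_range (fun j : ℕ => 1 / ‖1 - η * w ^ j‖ ^ 2) N] at hS2
  have hne : ∀ j : ℕ, η * w ^ j ≠ 1 := by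
    intro j
    apply ne_one_of_pow (N := N)
    rw [mul_pow, hηN, ← pow_mul, mul_comm j, pow_mul, hwp.pow_eq_one]; simp
  have hpos : ∀ j : ℕ, 0 < ‖1 - η * w ^ j‖ := fun j => norm_pos_iff.2 (sub_ne_zero.2 (hne j).symm)
  have hlow : ∀ j : Fin N, 2 / N ≤ ‖1 - η * w ^ (j:ℕ)‖ := by
    intro j
    have h1 : 1 / ‖1 - η * w ^ (j:ℕ)‖ ^ 2 ≤ (N:ℝ) ^ 2 / 4 := by
      rw [← hS2]
      exact Finset.single_le_sum (f := fun j : Fin N => 1 / ‖1 - η * w ^ (j:ℕ)‖ ^ 2)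
        (fun j _ => by positivity) (Finset.mem_univ j)
    have hp := hpos j
    rw [div_le_iff₀ (by positivity)] at h1
    rw [div_le_iff₀ hN']
    exact (sq_le_sq₀ (by norm_num) (by positivity)).1 (by nlinarith)
  set δ := D / (N:ℝ) ^ 3 with hδ
  have hδp : 0 < δ := by positivity
  have hpert : ∀ j : Fin N, ‖ee L (s - b j) - η * w ^ (j:ℕ)‖ ≤ δ := by
    intro j
    rw [hz0]
    refine (chord_upper hL _ _).trans ?_
    have h1 : |s - b j - ((i + α) * (L / N) - ((j:ℕ) + β) * (L / N))| ≤ 2 * (M / (N:ℝ) ^ 3) := by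
      have e : s - b j - ((i + α) * (L / N) - ((j:ℕ) + β) * (L / N))
        = (s - (i + α) * (L / N)) - (b j - ((j:ℕ) + β) * (L / N)) := by ring
      rw [e]
      refine (abs_sub _ _).trans ?_
      linarith [hb j]
    calc _ ≤ 2 * π / L * (2 * (M / (N:ℝ) ^ 3)) := by have := pi_pos; gcongr
      _ = δ := by rw [hδ, hD]; field_simp; ring
  have h2δ : ∀ j : Fin N, 2 * δ ≤ ‖1 - η * w ^ (j:ℕ)‖ := by
    intro j
    refine le_trans ?_ (hlow j)
    rw [hδ, le_div_iff₀ hN']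
    have : 2 * (D / (N:ℝ) ^ 3) * N = 2 * (D / (N:ℝ) ^ 2) := by field_simp
    rw [this]
    have : D / (N:ℝ) ^ 2 ≤ 1 := (div_le_one (by positivity)).2 hNb
    linarith
  have hP := fun j : Fin N => pert_inv (hpert j) (h2δ j) (hpos j)
  refine ⟨fun j => (hP j).1, ?_, ?_⟩
  · rw [← hS1, ← Finset.sum_sub_distrib]
    refine (norm_sum_le _ _).trans ?_
    calc _ ≤ ∑ j : Fin N, 2 * δ * (1 / ‖1 - η * w ^ (j:ℕ)‖ ^ 2) :=
          Finset.sum_le_sum fun j _ => (hP j).2.1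
      _ = D / N / 2 := by
          rw [← Finset.mul_sum, hS2, hδ]; field_simp; ring
      _ ≤ _ := by
          have : 0 < D / N := by positivity
          linarith
  · rw [← hS2, ← Finset.sum_sub_distrib]
    refine (Finset.abs_sum_le_sum_abs _ _).trans ?_
    calc _ ≤ ∑ j : Fin N, 3 * δ * N * (1 / ‖1 - η * w ^ (j:ℕ)‖ ^ 2) := by
          apply Finset.sum_le_sum
          intro j _
          refine (hP j).2.2.trans ?_
          apply mul_le_mul_of_nonneg_right _ (by positivity)
          have : 1 / ‖1 - η * w ^ (j:ℕ)‖ ≤ N / 2 := by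
            rw [div_le_iff₀ (hpos j)]
            have := hlow j
            rw [div_le_iff₀ hN'] at this
            linarith
          nlinarith
      _ = D * (3 / 4) := by
          rw [← Finset.mul_sum, hS2, hδ]; field_simp
      _ ≤ _ := by linarith


lemma mesh_sep {L M : ℝ} (hL : 0 < L) (hM : 0 < M) {α : ℝ}
    {N : ℕ} (hN : 0 < N) (hNb : 4 * π * M / L ≤ (N:ℝ) ^ 2) (a : Fin N → ℝ)
    (ha : ∀ j : Fin N, |a j - ((j : ℕ) + α) * (L / N)| ≤ M / (N:ℝ) ^ 3) (i k : Fin N) (hik : i ≠ k) :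
    2 / N ≤ ‖ee L (a i) - ee L (a k)‖ := by
  have hN' : (0:ℝ) < N := by exact_mod_cast hN
  obtain ⟨n, hn⟩ := exists_near hL (a k) (a i)
  have h1 := chord_lower hL (a k) (a i + n * L) hn
  have h2 : ee L (a i + n * L) = ee L (a i) := (ee_eq_iff hL _ _).2 ⟨n, rfl⟩
  rw [h2] at h1
  refine le_trans ?_ h1
  have hz : (1:ℝ) ≤ |((i:ℕ):ℝ) - ((k:ℕ):ℝ) + n * N| := by
    have : ((i:ℕ):ℤ) - ((k:ℕ):ℤ) + n * N ≠ 0 := by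
      intro h
      have hi := i.2
      have hk := k.2
      have : n = 0 := by
        by_contra hn0
        rcases lt_or_gt_of_ne hn0 with h0 | h0
        · have : n * N ≤ -1 * (N:ℤ) := by nlinarith
          omega
        · have : 1 * (N:ℤ) ≤ n * N := by nlinarith
          omega
      rw [this] at h
      exact hik (Fin.ext (by omega))
    have h3 := Int.one_le_abs this
    exact_mod_cast h3
  have e : a i + n * L - a k = (((i:ℕ):ℝ) - ((k:ℕ):ℝ) + n * N) * (L / N) +
      ((a i - ((i : ℕ) + α) * (L / N)) - (a k - ((k : ℕ) + α) * (L / N))) := by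
    field_simp; ring
  have h4 : |(((i:ℕ):ℝ) - ((k:ℕ):ℝ) + n * N) * (L / N)| - 2 * (M / (N:ℝ) ^ 3) ≤ |a i + n * L - a k| := by
    have h5 : |(a i - ((i : ℕ) + α) * (L / N)) - (a k - ((k : ℕ) + α) * (L / N))| ≤ 2 * (M / (N:ℝ) ^ 3) := by
      refine (abs_sub _ _).trans ?_
      linarith [ha i, ha k]
    have h6 := abs_sub_abs_le_abs_sub ((((i:ℕ):ℝ) - ((k:ℕ):ℝ) + n * N) * (L / N))
      (-((a i - ((i : ℕ) + α) * (L / N)) - (a k - ((k : ℕ) + α) * (L / N))))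
    rw [abs_neg, sub_neg_eq_add, ← e] at h6
    linarith
  rw [abs_mul, abs_of_pos (by positivity : 0 < L / N)] at h4
  have h7 : L / N ≤ |((i:ℕ):ℝ) - ((k:ℕ):ℝ) + n * N| * (L / N) := le_mul_of_one_le_left (by positivity) hz
  have h8 : 2 * (M / (N:ℝ) ^ 3) ≤ L / N / 2 := by
    rw [div_le_iff₀ hL] at hNb
    have : 4 * M ≤ (N:ℝ) ^ 2 * L := by nlinarith [pi_gt_three]
    rw [div_div, le_div_iff₀ (by positivity)]
    have e2 : 2 * (M / (N:ℝ) ^ 3) * (N * 2) = 4 * M / (N:ℝ) ^ 2 := by field_simp; ring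
    rw [e2, div_le_iff₀ (by positivity)]
    linarith
  have h9 : L / (2 * N) ≤ |a i + n * L - a k| := by
    have : L / (2 * N) = L / N / 2 := by field_simp
    rw [this]; linarith
  calc 2 / (N:ℝ) = 4 / L * (L / (2 * N)) := by field_simp; ring
    _ ≤ _ := by gcongr

lemma S_est {L M : ℝ} (hL : 0 < L) (hM : 0 < M) {l : ℝ → ℂ}
    {K : ℝ × ℝ → ℂ} (hK : ContDiff ℝ (⊤ : ℕ∞) K) (h1 : ∀ p, K (p + (L, 0)) = K p)
    (h2 : ∀ p, K (p + (0, L)) = K p) (hIntg : ∀ s, ∫ t in (0:ℝ)..L, K (s, t) = 0)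
    (hf : ∀ s t, ee L s ≠ ee L t → l s ≠ l t ∧
        deriv l t / (l s - l t) = cc L * ee L t / (ee L s - ee L t) + K (s, t)) :
    ∃ C, 0 < C ∧ ∀ (N : ℕ), 0 < N → 4 * π * M / L ≤ (N:ℝ) ^ 2 → ∀ α β : ℝ,
      ee L ((α - β) * L) = -1 → ∀ b : Fin N → ℝ,
      (∀ j : Fin N, |b j - ((j : ℕ) + β) * (L / N)| ≤ M / (N:ℝ) ^ 3) →
      ∀ (s : ℝ) (i : ℕ), |s - (i + α) * (L / N)| ≤ M / (N:ℝ) ^ 3 →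
      ‖((L / N : ℝ) : ℂ) * ∑ j, deriv l (b j) / (l s - l (b j)) + π * Complex.I‖
        ≤ C / (N:ℝ) ^ 2 := by
  obtain ⟨C2, hC2, hb2⟩ := periodic_bounded hL (pd2_smooth hK).continuous (pd2_per h1) (pd2_per h2)
  obtain ⟨C3, hC3, hb3⟩ := periodic_bounded hL (pd2_smooth (pd2_smooth hK)).continuous
    (pd2_per (pd2_per h1)) (pd2_per (pd2_per h2))
  have hpi := pi_pos
  refine ⟨2 * π * (4 * π * M / L) + C3 * L ^ 3 + L * C2 * M, by positivity, ?_⟩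
  intro N hN hNb α β hαβ b hb s i hs
  have hN' : (0:ℝ) < N := by exact_mod_cast hN
  have hN1 : (1:ℝ) ≤ N := by exact_mod_cast hN
  obtain ⟨hc1, hc2, -⟩ := circle_sums hL hM hαβ hN hNb b hb s i hs
  set D := 4 * π * M / L
  have hterm : ∀ j ∈ Finset.univ, deriv l (b j) / (l s - l (b j)) =
      -cc L * (1 / (1 - ee L (s - b j))) + (K (s, ((j:ℕ) + β) * (L / N)) +
        (K (s, b j) - K (s, ((j:ℕ) + β) * (L / N)))) := by
    intro j _
    have hne := hc1 j
    rw [ee_sub] at hne ⊢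
    have hb0 := ee_ne L (b j)
    have hne2 : ee L s ≠ ee L (b j) := by
      intro h; rw [h, div_self hb0] at hne; exact hne rfl
    rw [(hf s (b j) hne2).2]
    have e1 : ee L s - ee L (b j) ≠ 0 := sub_ne_zero.2 hne2
    have e2 : ee L (b j) - ee L s ≠ 0 := sub_ne_zero.2 hne2.symm
    have : cc L * ee L (b j) / (ee L s - ee L (b j)) = -cc L * (1 / (1 - ee L s / ee L (b j))) := by
      rw [one_sub_div hb0, one_div_div, ← neg_sub (ee L (b j)) (ee L s), div_neg]
      ring
    rw [this]
    ring
  rw [Finset.sum_congr rfl hterm, Finset.sum_add_distrib, Finset.sum_add_distrib, ← Finset.mul_sum]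
  have hcc : ((L / N : ℝ) : ℂ) * (cc L * (N / 2)) = π * Complex.I := by
    unfold cc
    have : (L:ℂ) ≠ 0 := by exact_mod_cast hL.ne'
    have : (N:ℂ) ≠ 0 := by exact_mod_cast hN.ne'
    push_cast
    field_simp
  have e : ((L / N : ℝ) : ℂ) * (-cc L * ∑ j, 1 / (1 - ee L (s - b j)) +
      (∑ j : Fin N, K (s, ((j:ℕ) + β) * (L / N)) +
        ∑ j : Fin N, (K (s, b j) - K (s, ((j:ℕ) + β) * (L / N))))) + π * Complex.I =
      -(((L / N : ℝ) : ℂ) * cc L * (∑ j, 1 / (1 - ee L (s - b j)) - N / 2)) +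
      ((L / N : ℝ) : ℂ) * ∑ j : Fin N, K (s, ((j:ℕ) + β) * (L / N)) +
      ((L / N : ℝ) : ℂ) * ∑ j : Fin N, (K (s, b j) - K (s, ((j:ℕ) + β) * (L / N))) := by
    rw [← hcc]; ring
  rw [e]
  have hLN : ‖((L / N : ℝ) : ℂ)‖ = L / N := by
    rw [Complex.norm_real, Real.norm_eq_abs, abs_of_pos (by positivity)]
  have b1 : ‖-(((L / N : ℝ) : ℂ) * cc L * (∑ j, 1 / (1 - ee L (s - b j)) - N / 2))‖ ≤
      2 * π * D / (N:ℝ) ^ 2 := by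
    rw [norm_neg, norm_mul, norm_mul, hLN, cc_norm hL]
    calc _ ≤ L / N * (2 * π / L) * (D / N) := by gcongr
      _ = _ := by field_simp
  have b2 : ‖((L / N : ℝ) : ℂ) * ∑ j : Fin N, K (s, ((j:ℕ) + β) * (L / N))‖ ≤
      C3 * L ^ 3 / (N:ℝ) ^ 2 := by
    refine midpoint_rule hL (g := fun t => K (s, t)) (g' := fun t => pd2 K (s, t))
      (fun t => pd2_hasDerivAt hK s t) hC3.le ?_ ?_ (hIntg s) β N hN
    · intro x y
      exact lip2 (pd2_smooth hK) hb3 s y x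
    · intro t
      simpa using h2 (s, t)
  have b3 : ‖((L / N : ℝ) : ℂ) * ∑ j : Fin N, (K (s, b j) - K (s, ((j:ℕ) + β) * (L / N)))‖ ≤
      L * C2 * M / (N:ℝ) ^ 2 := by
    rw [norm_mul, hLN]
    have : ‖∑ j : Fin N, (K (s, b j) - K (s, ((j:ℕ) + β) * (L / N)))‖ ≤
        ∑ j : Fin N, C2 * (M / (N:ℝ) ^ 3) := by
      refine (norm_sum_le _ _).trans (Finset.sum_le_sum fun j _ => ?_)
      refine (lip2 hK hb2 s _ _).trans ?_
      have := hb j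
      gcongr
    rw [Finset.sum_const, Finset.card_univ, Fintype.card_fin, nsmul_eq_mul] at this
    calc _ ≤ L / N * (N * (C2 * (M / (N:ℝ) ^ 3))) := by gcongr
      _ = L * C2 * M / (N:ℝ) ^ 2 / N := by field_simp
      _ ≤ _ := div_le_self (by positivity) hN1
  refine (norm_add₃_le).trans ?_
  rw [add_div, add_div]
  linarith

lemma entries {L M : ℝ} (hL : 0 < L) (hM : 0 < M) {l : ℝ → ℂ}
    (hsm : ContDiff ℝ (⊤ : ℕ∞) l) (hper : ∀ s, l (s + L) = l s)
    (harc : ∀ s, ‖deriv l s‖ = 1) (hinj : Set.InjOn l (Set.Ico 0 L))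
    (horient : ∃ z₀ : ℂ, (∀ s, l s ≠ z₀) ∧
      (∫ t in (0:ℝ)..L, deriv l t / (l t - z₀)) = 2 * (π : ℂ) * Complex.I) :
    ∃ C, 0 < C ∧ ∀ (N : ℕ), 0 < N → 4 * π * M / L ≤ (N:ℝ) ^ 2 → ∀ α β : ℝ,
      ee L ((α - β) * L) = -1 → ∀ a b : Fin N → ℝ,
      (∀ j : Fin N, |a j - ((j : ℕ) + α) * (L / N)| ≤ M / (N:ℝ) ^ 3) →
      (∀ j : Fin N, |b j - ((j : ℕ) + β) * (L / N)| ≤ M / (N:ℝ) ^ 3) →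
      (∀ i k, i ≠ k → ‖((L ^ 2 / (N:ℝ) ^ 2 : ℝ) : ℂ) * ∑ j, deriv l (a i) / (l (a i) - l (b j)) *
        (deriv l (b j) / (l (b j) - l (a k)))‖ ≤ C / (N:ℝ) ^ 2) ∧
      (∀ i, ‖((L ^ 2 / (N:ℝ) ^ 2 : ℝ) : ℂ) * ∑ j, deriv l (a i) / (l (a i) - l (b j)) *
        (deriv l (b j) / (l (b j) - l (a i))) + (π:ℂ) ^ 2‖ ≤ C / N) := by
  obtain ⟨K, hK, h1, h2, hIntg, hf, c, hc, hcl⟩ := exists_K hL hsm hper harc hinj horient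
  obtain ⟨C1, hC1, hS⟩ := S_est hL hM hK h1 h2 hIntg hf
  obtain ⟨C4, hC4, hb4⟩ := periodic_bounded hL (pd1_smooth hK).continuous (pd1_per h1) (pd1_per h2)
  have hpi := pi_pos
  refine ⟨L / c * C1 + (4 * π ^ 2 * (4 * π * M / L) + L ^ 2 * C4), by positivity, ?_⟩
  intro N hN hNb α β hαβ a b ha hb
  have hN' : (0:ℝ) < N := by exact_mod_cast hN
  have hN1 : (1:ℝ) ≤ N := by exact_mod_cast hN
  have hne : ∀ i j, ee L (a i) ≠ ee L (b j) := by
    intro i j h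
    have := (circle_sums hL hM hαβ hN hNb b hb (a i) i (ha i)).1 j
    rw [ee_sub, h, div_self (ee_ne L _)] at this
    exact this rfl
  constructor
  · intro i k hik
    have hsep := mesh_sep hL hM hN hNb a ha i k hik
    have hsep2 : c * (2 / N) ≤ ‖l (a i) - l (a k)‖ := by
      refine le_trans ?_ (hcl _ _)
      gcongr
    have hpos : 0 < ‖l (a i) - l (a k)‖ := lt_of_lt_of_le (by positivity) hsep2
    have hd : l (a i) - l (a k) ≠ 0 := norm_pos_iff.1 hpos
    have e : ((L ^ 2 / (N:ℝ) ^ 2 : ℝ) : ℂ) * ∑ j, deriv l (a i) / (l (a i) - l (b j)) *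
        (deriv l (b j) / (l (b j) - l (a k))) =
        ((L / N : ℝ) : ℂ) * (deriv l (a i) / (l (a i) - l (a k))) *
        ((((L / N : ℝ) : ℂ) * ∑ j, deriv l (b j) / (l (a i) - l (b j)) + π * Complex.I) -
         (((L / N : ℝ) : ℂ) * ∑ j, deriv l (b j) / (l (a k) - l (b j)) + π * Complex.I)) := by
      have : ∀ j ∈ Finset.univ, deriv l (a i) / (l (a i) - l (b j)) *
        (deriv l (b j) / (l (b j) - l (a k))) = (deriv l (a i) / (l (a i) - l (a k))) *
          (deriv l (b j) / (l (a i) - l (b j)) - deriv l (b j) / (l (a k) - l (b j))) := by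
        intro j _
        have d1 : l (a i) - l (b j) ≠ 0 := sub_ne_zero.2 (hf _ _ (hne i j)).1
        have d2 : l (a k) - l (b j) ≠ 0 := sub_ne_zero.2 (hf _ _ (hne k j)).1
        rw [← neg_sub (l (a k)) (l (b j)), div_neg]
        field_simp
        ring
      rw [Finset.sum_congr rfl this, ← Finset.mul_sum, Finset.sum_sub_distrib]
      push_cast
      ring
    rw [e, norm_mul, norm_mul, norm_div, harc, Complex.norm_real, Real.norm_eq_abs,
      abs_of_pos (by positivity : 0 < L / N)]
    have s1 := hS N hN hNb α β hαβ b hb (a i) i (ha i)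
    have s2 := hS N hN hNb α β hαβ b hb (a k) k (ha k)
    have s3 := (norm_sub_le _ _).trans (add_le_add s1 s2)
    calc _ ≤ L / N * (1 / (c * (2 / N))) * (C1 / (N:ℝ) ^ 2 + C1 / (N:ℝ) ^ 2) := by gcongr
      _ = (L / c * C1) / (N:ℝ) ^ 2 := by field_simp; ring
      _ ≤ _ := by
        gcongr
        have : 0 ≤ 4 * π ^ 2 * (4 * π * M / L) + L ^ 2 * C4 := by positivity
        linarith
  · intro i
    obtain ⟨-, -, hc3⟩ := circle_sums hL hM hαβ hN hNb b hb (a i) i (ha i)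
    set D := 4 * π * M / L
    have hDp : 0 < D := by positivity
    have : ∀ j ∈ Finset.univ, deriv l (a i) / (l (a i) - l (b j)) *
        (deriv l (b j) / (l (b j) - l (a i))) =
        cc L ^ 2 * ((1 / ‖1 - ee L (a i - b j)‖ ^ 2 : ℝ) : ℂ) + pd1 K (a i, b j) := by
      intro j _
      rw [K_deriv hsm hK hf _ _ (hne i j)]
      congr 1
      rw [← mul_neg]
      congr 1
      have hx0 := ee_ne L (a i)
      have hy0 := ee_ne L (b j)
      have hd : ee L (a i) - ee L (b j) ≠ 0 := sub_ne_zero.2 (hne i j)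
      have hxc : ∀ s, (starRingEnd ℂ) (ee L s) = (ee L s)⁻¹ := by
        intro s
        rw [Complex.inv_def, Complex.normSq_eq_norm_sq, ee_norm]; simp
      have h3 : ((‖1 - ee L (a i - b j)‖ : ℝ) : ℂ) ^ 2 = (1 - ee L (a i - b j)) *
          (starRingEnd ℂ) (1 - ee L (a i - b j)) := by
        rw [Complex.mul_conj, Complex.normSq_eq_norm_sq]; push_cast; rfl
      push_cast
      rw [h3, map_sub, hxc, ee_sub, map_one]
      have d1 : ee L (b j) - ee L (a i) ≠ 0 := sub_ne_zero.2 (hne i j).symm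
      have e5 : (1 - ee L (a i) / ee L (b j)) * (1 - (ee L (a i) / ee L (b j))⁻¹) =
          -((ee L (a i) - ee L (b j)) ^ 2 / (ee L (a i) * ee L (b j))) := by
        field_simp; ring
      rw [e5]
      field_simp
    rw [Finset.sum_congr rfl this, Finset.sum_add_distrib, ← Finset.mul_sum, ← Complex.ofReal_sum]
    have hcc : ((L ^ 2 / (N:ℝ) ^ 2 : ℝ) : ℂ) * (cc L ^ 2 * (((N:ℝ) ^ 2 / 4 : ℝ) : ℂ)) = - (π:ℂ) ^ 2 := by
      unfold cc
      have : (L:ℂ) ≠ 0 := by exact_mod_cast hL.ne'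
      have : (N:ℂ) ≠ 0 := by exact_mod_cast hN.ne'
      rw [mul_pow, Complex.I_sq]
      push_cast
      field_simp
      ring
    have e : ((L ^ 2 / (N:ℝ) ^ 2 : ℝ) : ℂ) *
        (cc L ^ 2 * ((∑ j, 1 / ‖1 - ee L (a i - b j)‖ ^ 2 : ℝ) : ℂ) + ∑ j, pd1 K (a i, b j))
          + (π:ℂ) ^ 2 =
        ((L ^ 2 / (N:ℝ) ^ 2 : ℝ) : ℂ) *
        (cc L ^ 2 * ((∑ j, 1 / ‖1 - ee L (a i - b j)‖ ^ 2 - (N:ℝ) ^ 2 / 4 : ℝ) : ℂ) +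
          ∑ j, pd1 K (a i, b j)) := by
      rw [← neg_neg ((π:ℂ) ^ 2), ← hcc, Complex.ofReal_sub]
      ring
    rw [e, norm_mul, Complex.norm_real, Real.norm_eq_abs, abs_of_pos (by positivity)]
    have n1 : ‖cc L ^ 2 * ((∑ j, 1 / ‖1 - ee L (a i - b j)‖ ^ 2 - (N:ℝ) ^ 2 / 4 : ℝ) : ℂ)‖ ≤
        (2 * π / L) ^ 2 * D := by
      rw [norm_mul, norm_pow, cc_norm hL, Complex.norm_real, Real.norm_eq_abs]
      gcongr
    have n2 : ‖∑ j, pd1 K (a i, b j)‖ ≤ N * C4 := by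
      refine (norm_sum_le _ _).trans ((Finset.sum_le_sum fun j _ => hb4 _).trans ?_)
      simp
    calc _ ≤ L ^ 2 / (N:ℝ) ^ 2 * ((2 * π / L) ^ 2 * D + N * C4) := by
          gcongr
          exact (norm_add_le _ _).trans (add_le_add n1 n2)
      _ = 4 * π ^ 2 * D / N / N + L ^ 2 * C4 / N := by field_simp; ring
      _ ≤ 4 * π ^ 2 * D / N + L ^ 2 * C4 / N := by
          gcongr
          exact div_le_self (by positivity) hN1
      _ ≤ _ := by
          rw [← add_div]
          apply div_le_div_of_nonneg_right _ hN'.le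
          have : 0 < L / c * C1 := by positivity
          linarith


lemma l2_bound {N : ℕ} (hN : 0 < N) {C : ℝ} (hC : 0 < C) (y z : Fin N → ℝ)
    (h : ∀ i, |y i| ≤ C / N * |z i| + C / (N:ℝ) ^ 2 * ∑ k, |z k|) :
    l2norm y ≤ 2 * C / N * l2norm z := by
  have hN' : (0:ℝ) < N := by exact_mod_cast hN
  unfold l2norm
  rw [← Real.sqrt_sq (by positivity : 0 ≤ 2 * C / (N:ℝ)), ← Real.sqrt_mul (by positivity)]
  apply Real.sqrt_le_sqrt
  have hcs : (∑ k, |z k|) ^ 2 ≤ N * ∑ k, z k ^ 2 := by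
    have := sq_sum_le_card_mul_sum_sq (s := Finset.univ) (f := fun k : Fin N => |z k|)
    simpa using this
  have hi : ∀ i, y i ^ 2 ≤ 2 * (C / N) ^ 2 * z i ^ 2 + 2 * (C / (N:ℝ) ^ 2) ^ 2 * (N * ∑ k, z k ^ 2) := by
    intro i
    have h1 : y i ^ 2 ≤ (C / N * |z i| + C / (N:ℝ) ^ 2 * ∑ k, |z k|) ^ 2 := by
      rw [← sq_abs]
      exact pow_le_pow_left₀ (abs_nonneg _) (h i) 2
    have h2 := add_sq_le (a := C / N * |z i|) (b := C / (N:ℝ) ^ 2 * ∑ k, |z k|)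
    rw [mul_pow, mul_pow, sq_abs] at h2
    have h3 : (C / (N:ℝ) ^ 2) ^ 2 * (∑ k, |z k|) ^ 2 ≤ (C / (N:ℝ) ^ 2) ^ 2 * (N * ∑ k, z k ^ 2) := by
      gcongr
    linarith
  have hs := Finset.sum_le_sum (s := Finset.univ) fun i _ => hi i
  rw [Finset.sum_add_distrib, ← Finset.mul_sum, Finset.sum_const, Finset.card_univ,
    Fintype.card_fin, nsmul_eq_mul] at hs
  have e : 2 * (C / N) ^ 2 * ∑ i, z i ^ 2 + N * (2 * (C / (N:ℝ) ^ 2) ^ 2 * (N * ∑ k, z k ^ 2)) =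
      (2 * C / N) ^ 2 * ∑ i, z i ^ 2 := by field_simp; ring
  rw [e] at hs
  calc _ ≤ (N:ℝ)⁻¹ * ((2 * C / N) ^ 2 * ∑ i, z i ^ 2) := by gcongr
    _ = _ := by ring

lemma Bmat_eq (l : ℝ → ℂ) {N : ℕ} (a b : Fin N → ℝ) (i j : Fin N) :
    Bmat l a b i j = (deriv l (a i) / (l (a i) - l (b j))).re := by
  simp only [Bmat, Matrix.of_apply, dotR]
  rw [Complex.div_re, Complex.normSq_eq_norm_sq]
  ring

lemma Amat_eq (l : ℝ → ℂ) {N : ℕ} (a b : Fin N → ℝ) (i j : Fin N) :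
    Amat l a b i j = (deriv l (a i) / (l (a i) - l (b j))).im := by
  simp only [Amat, Matrix.of_apply, dotR, normalv]
  rw [Complex.div_im, Complex.normSq_eq_norm_sq]
  simp
  ring

lemma one_side {L C : ℝ} (hC : 0 < C) {l : ℝ → ℂ} {N : ℕ} (hN : 0 < N) (a b : Fin N → ℝ)
    (h1 : ∀ i k, i ≠ k → ‖((L ^ 2 / (N:ℝ) ^ 2 : ℝ) : ℂ) * ∑ j, deriv l (a i) / (l (a i) - l (b j)) *
        (deriv l (b j) / (l (b j) - l (a k)))‖ ≤ C / (N:ℝ) ^ 2)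
    (h2 : ∀ i, ‖((L ^ 2 / (N:ℝ) ^ 2 : ℝ) : ℂ) * ∑ j, deriv l (a i) / (l (a i) - l (b j)) *
        (deriv l (b j) / (l (b j) - l (a i))) + (π:ℂ) ^ 2‖ ≤ C / N) (z : Fin N → ℝ) :
    l2norm (fun i => (L ^ 2 / (N : ℝ) ^ 2) *
            ((Bmat l a b * Bmat l b a - Amat l a b * Amat l b a).mulVec z i) + π ^ 2 * z i)
        + l2norm (fun i => (L ^ 2 / (N : ℝ) ^ 2) *
            ((Amat l a b * Bmat l b a + Bmat l a b * Amat l b a).mulVec z i))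
        ≤ 4 * C / (N : ℝ) * l2norm z := by
  have hN' : (0:ℝ) < N := by exact_mod_cast hN
  set P : Fin N → Fin N → ℂ := fun i k => ∑ j, deriv l (a i) / (l (a i) - l (b j)) *
        (deriv l (b j) / (l (b j) - l (a k))) with hP
  set r : ℝ := L ^ 2 / (N:ℝ) ^ 2 with hr
  set w : Fin N → ℂ := fun i => (r:ℂ) * ∑ k, P i k * z k + (π:ℂ) ^ 2 * z i with hw
  have e1 : ∀ i, r * ((Bmat l a b * Bmat l b a - Amat l a b * Amat l b a).mulVec z i) + π ^ 2 * z i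
      = (w i).re := by
    intro i
    have : (w i).re = r * (∑ k, P i k * z k).re + π ^ 2 * z i := by
      rw [hw]
      simp only [Complex.add_re, Complex.re_ofReal_mul]
      congr 1
      rw [← Complex.ofReal_pow, Complex.re_ofReal_mul, Complex.ofReal_re]
    rw [this]
    congr 2
    rw [Complex.re_sum, Matrix.mulVec, dotProduct]
    apply Finset.sum_congr rfl
    intro k _
    rw [Complex.re_mul_ofReal, hP]
    congr 1
    rw [Complex.re_sum, Matrix.sub_apply, Matrix.mul_apply, Matrix.mul_apply, ← Finset.sum_sub_distrib]
    apply Finset.sum_congr rfl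
    intro j _
    rw [Bmat_eq, Bmat_eq, Amat_eq, Amat_eq, Complex.mul_re]
  have e2 : ∀ i, r * ((Amat l a b * Bmat l b a + Bmat l a b * Amat l b a).mulVec z i)
      = (w i).im := by
    intro i
    have : (w i).im = r * (∑ k, P i k * z k).im := by
      rw [hw]
      simp only [Complex.add_im, Complex.im_ofReal_mul]
      rw [← Complex.ofReal_pow, Complex.im_ofReal_mul, Complex.ofReal_im]
      simp
    rw [this]
    congr 1
    rw [Complex.im_sum, Matrix.mulVec, dotProduct]
    apply Finset.sum_congr rfl
    intro k _
    rw [Complex.im_mul_ofReal, hP]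
    congr 1
    rw [Complex.im_sum, Matrix.add_apply, Matrix.mul_apply, Matrix.mul_apply, ← Finset.sum_add_distrib]
    apply Finset.sum_congr rfl
    intro j _
    rw [Bmat_eq, Bmat_eq, Amat_eq, Amat_eq, Complex.mul_im]
    ring
  have hwb : ∀ i, ‖w i‖ ≤ C / N * |z i| + C / (N:ℝ) ^ 2 * ∑ k, |z k| := by
    intro i
    have e3 : w i = ((r:ℂ) * P i i + (π:ℂ) ^ 2) * z i +
        ∑ k ∈ Finset.univ.erase i, (r:ℂ) * P i k * z k := by
      rw [hw]
      simp only
      rw [← Finset.add_sum_erase _ _ (Finset.mem_univ i), mul_add, Finset.mul_sum]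
      simp only [mul_assoc]
      ring
    rw [e3]
    refine (norm_add_le _ _).trans (add_le_add ?_ ?_)
    · rw [norm_mul, Complex.norm_real, Real.norm_eq_abs]
      exact mul_le_mul_of_nonneg_right (h2 i) (abs_nonneg _)
    · refine (norm_sum_le _ _).trans ?_
      rw [Finset.mul_sum]
      calc _ ≤ ∑ k ∈ Finset.univ.erase i, C / (N:ℝ) ^ 2 * |z k| := by
            apply Finset.sum_le_sum
            intro k hk
            rw [norm_mul, Complex.norm_real, Real.norm_eq_abs]
            exact mul_le_mul_of_nonneg_right (h1 i k (Finset.ne_of_mem_erase hk).symm) (abs_nonneg _)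
        _ ≤ _ := by
            apply Finset.sum_le_sum_of_subset_of_nonneg (Finset.erase_subset _ _)
            intro k _ _
            positivity
  simp only [e1, e2]
  have b1 := l2_bound hN hC (fun i => (w i).re) z fun i => (Complex.abs_re_le_norm _).trans (hwb i)
  have b2 := l2_bound hN hC (fun i => (w i).im) z fun i => (Complex.abs_im_le_norm _).trans (hwb i)
  calc _ ≤ 2 * C / N * l2norm z + 2 * C / N * l2norm z := add_le_add b1 b2
    _ = _ := by ring

lemma ee_half {L : ℝ} (hL : 0 < L) : ee L (1 / 2 * L) = -1 := by
  unfold ee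
  have : (2 * π * (1 / 2 * L) / L) = π := by field_simp
  rw [this, Complex.exp_pi_mul_I]

lemma ee_half' {L : ℝ} (hL : 0 < L) : ee L (-(1 / 2) * L) = -1 := by
  have h := ee_add L (1 / 2 * L) (-(1 / 2) * L)
  rw [ee_half hL, show 1 / 2 * L + -(1 / 2) * L = 0 by ring] at h
  have h0 : ee L 0 = 1 := by simp [ee]
  rw [h0] at h
  linear_combination h


/-- Approximation of the Poincaré–Bertrand identities by the discretized operators. -/
theorem discretized_poincare_bertrand
    (L : ℝ) (hL : 0 < L) (l : ℝ → ℂ)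
    (hsm : ContDiff ℝ (⊤ : ℕ∞) l) (hper : ∀ s, l (s + L) = l s)
    (harc : ∀ s, ‖deriv l s‖ = 1) (hinj : Set.InjOn l (Set.Ico 0 L))
    (horient : ∃ z₀ : ℂ, (∀ s, l s ≠ z₀) ∧
      (∫ t in (0:ℝ)..L, deriv l t / (l t - z₀)) = 2 * (π : ℂ) * Complex.I)
    (κ : ℕ) (hκ : 2 ≤ κ) (M : ℝ) (hM : 0 < M)
    (ms mst : (N : ℕ) → Fin N → ℝ)
    (hms : ∀ N, 2 ≤ N → ∀ i : Fin N, ms N i ∈ Set.Ico (0:ℝ) L ∧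
      |ms N i - ((i : ℕ) : ℝ) * L / (N : ℝ)| ≤ M / (N : ℝ) ^ (κ + 1))
    (hmst : ∀ N, 2 ≤ N → ∀ i : Fin N, mst N i ∈ Set.Ico (0:ℝ) L ∧
      |mst N i - (((i : ℕ) : ℝ) + 1/2) * L / (N : ℝ)| ≤ M / (N : ℝ) ^ (κ + 1)) :
    ∃ C > 0, ∃ N₀ : ℕ, ∀ N : ℕ, N₀ ≤ N → ∀ z : Fin N → ℝ,
      (l2norm (fun i => (L ^ 2 / (N : ℝ) ^ 2) *
            ((Bmat l (mst N) (ms N) * Bmat l (ms N) (mst N)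
              - Amat l (mst N) (ms N) * Amat l (ms N) (mst N)).mulVec z i) + π ^ 2 * z i)
        + l2norm (fun i => (L ^ 2 / (N : ℝ) ^ 2) *
            ((Amat l (mst N) (ms N) * Bmat l (ms N) (mst N)
              + Bmat l (mst N) (ms N) * Amat l (ms N) (mst N)).mulVec z i))
        ≤ C / (N : ℝ) * l2norm z) ∧
      (l2norm (fun i => (L ^ 2 / (N : ℝ) ^ 2) *
            ((Bmat l (ms N) (mst N) * Bmat l (mst N) (ms N)
              - Amat l (ms N) (mst N) * Amat l (mst N) (ms N)).mulVec z i) + π ^ 2 * z i)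
        + l2norm (fun i => (L ^ 2 / (N : ℝ) ^ 2) *
            ((Amat l (ms N) (mst N) * Bmat l (mst N) (ms N)
              + Bmat l (ms N) (mst N) * Amat l (mst N) (ms N)).mulVec z i))
        ≤ C / (N : ℝ) * l2norm z) := by

  obtain ⟨C, hC, hE⟩ := entries hL hM hsm hper harc hinj horient
  obtain ⟨N₁, hN₁⟩ := exists_nat_ge (4 * π * M / L)
  refine ⟨4 * C, by positivity, max 2 N₁, fun N hN z => ?_⟩
  have hN2 : 2 ≤ N := (le_max_left _ _).trans hN
  have hN0 : 0 < N := by omega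
  have hNr : (1:ℝ) ≤ N := by exact_mod_cast hN0
  have hNb : 4 * π * M / L ≤ (N:ℝ) ^ 2 := by
    have h1 : (N₁:ℝ) ≤ N := by exact_mod_cast (le_max_right _ _).trans hN
    nlinarith
  have hpow : M / (N:ℝ) ^ (κ + 1) ≤ M / (N:ℝ) ^ 3 := by
    apply div_le_div_of_nonneg_left hM.le (by positivity)
    exact pow_le_pow_right₀ hNr (by omega)
  have hs : ∀ j : Fin N, |ms N j - ((j : ℕ) + 0) * (L / N)| ≤ M / (N:ℝ) ^ 3 := by
    intro j
    have := (hms N hN2 j).2.trans hpow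
    rw [add_zero, ← mul_div_assoc]
    exact this
  have hst : ∀ j : Fin N, |mst N j - ((j : ℕ) + 1 / 2) * (L / N)| ≤ M / (N:ℝ) ^ 3 := by
    intro j
    have := (hmst N hN2 j).2.trans hpow
    rw [← mul_div_assoc]
    exact this
  constructor
  · obtain ⟨h1, h2⟩ := hE N hN0 hNb (1 / 2) 0 (by rw [sub_zero]; exact ee_half hL) (mst N) (ms N) hst hs
    exact one_side hC hN0 (mst N) (ms N) h1 h2 z
  · obtain ⟨h1, h2⟩ := hE N hN0 hNb 0 (1 / 2) (by rw [zero_sub]; exact ee_half' hL) (ms N) (mst N) hs hst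
    exact one_side hC hN0 (ms N) (mst N) h1 h2 z
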